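/- arXiv:2101.08225 — 2 statements merged into one kernel-verified Lean document; each statement's English description precedes it below -/
import Mathlib

section
/- Let Γ be a finite simple graph. The outer automorphism group Out(A_Γ) is finite if and only if for every vertex u of Γ: (i) any two vertices of Γ lying outside st(u) are connected by a path all of whose vertices lie outside st(u); and (ii) for every vertex v, if lk(u) ⊆ st(v) then u = v. -/
open scoped commutatorElement

/-- The set of relators of a right-angled Artin group: commutators of adjacent vertices. -/
def raagRels {V : Type*} (Γ : SimpleGraph V) : Set (FreeGroup V) :=
  {r | ∃ v w : V, Γ.Adj v w ∧ r = ⁅FreeGroup.of v, FreeGroup.of w⁆}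

/-- The right-angled Artin group of a simple graph. -/
abbrev RAAG {V : Type*} (Γ : SimpleGraph V) : Type _ := PresentedGroup (raagRels Γ)

instance conjRangeNormal (G : Type*) [Group G] :
    ((MulAut.conj : G →* MulAut G).range).Normal := by
  constructor
  rintro - ⟨g, rfl⟩ φ
  refine ⟨φ g, ?_⟩
  ext x
  simp [MulAut.conj_apply, mul_assoc]

/-- The outer automorphism group of a group: the quotient of the automorphism group
by the inner automorphisms. -/
def Out (G : Type*) [Group G] : Type _ :=
  MulAut G ⧸ (MulAut.conj : G →* MulAut G).range

instance (G : Type*) [Group G] : Group (Out G) :=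
  QuotientGroup.Quotient.group _

/-- The star of a vertex: the vertex together with its neighbours
(the link being the neighbour set `Γ.neighborSet u`). -/
def star {V : Type*} (Γ : SimpleGraph V) (u : V) : Set V :=
  insert u (Γ.neighborSet u)

/-- Any two vertices outside the star of `u` are connected by a path all of whose
vertices lie outside the star of `u`. -/
def connectedOutsideStar {V : Type*} (Γ : SimpleGraph V) (u : V) : Prop :=
  ∀ x y : {v : V // v ∉ star Γ u}, (Γ.induce {v : V | v ∉ star Γ u}).Reachable x y

/-!
If `lk(u) ⊆ st(v)` with `u ≠ v`, no nontrivial power of the transvection `u ↦ uv` is inner, as its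
action on the abelianization shows. If the complement of `st(u)` is disconnected, the same holds for
conjugation by `u` of the generators in one of its components, because the centralizer of a vertex
is generated by its star.

Conversely, assume (i) and (ii) and let `φ` be an automorphism. The tool is the family of walls of
the Salvetti complex's universal cover, realised as halfspaces in the group. If `w` occurs in every
conjugate of `φ v`, then `φ v` skewers a wall labelled `w`, which bounds the rank of the centralizer
of `φ v` in the abelianization by `deg w + 1`; for `v` itself this rank is at least `deg v + 1`. If
there are two such `w`, then by (ii) the bound improves to `deg w`, so `φ v` lies in the span of the
vertices of degree greater than `deg v`. Automorphisms preserve that span and `v` is not in it, so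
`φ v` is conjugate to some `w ^ ±1`.

Up to finitely many choices, `φ` thus sends each `v` to `h v * v * (h v)⁻¹`. Choose the `h v`, up to
composing `φ` with an inner automorphism, of least total length. By (i), no wall of `φ v` then
separates `1` from an `h w` with `w` outside `st(v)`, and by a ping-pong argument `x` and `φ x` lie
on the same sides of the walls of `v` and of `φ v`. As `φ` is surjective, it fixes every generator.
-/

namespace RAAG

variable {V : Type*} {Γ : SimpleGraph V}

/-! ### Generators and parabolic subgroups -/

section Generators

lemma mem_star_comm {u v : V} : u ∈ star Γ v ↔ v ∈ star Γ u :=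
  or_congr eq_comm (Γ.adj_comm v u)

variable {G : Type*} [Group G]

/-- The standard generator of `RAAG Γ` attached to the vertex `v`. -/
def of (Γ : SimpleGraph V) (v : V) : RAAG Γ :=
  PresentedGroup.of v

/-- The homomorphism out of `RAAG Γ` with prescribed values on the generators. -/
def lift (f : V → G) (hf : ∀ s t, Γ.Adj s t → Commute (f s) (f t)) : RAAG Γ →* G :=
  PresentedGroup.toGroup (f := f) <| by
    rintro _ ⟨s, t, hst, rfl⟩
    rw [map_commutatorElement, FreeGroup.lift_apply_of, FreeGroup.lift_apply_of,
      commutatorElement_eq_one_iff_commute]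
    exact hf s t hst

@[simp]
lemma lift_of (f : V → G) (hf : ∀ s t, Γ.Adj s t → Commute (f s) (f t)) (s : V) :
    lift f hf (of Γ s) = f s := by
  simp [lift, of]

lemma hom_ext {f g : RAAG Γ →* G} (h : ∀ s, f (of Γ s) = g (of Γ s)) : f = g :=
  PresentedGroup.ext h

lemma commute_of_of {s t : V} (h : Γ.Adj s t) : Commute (of Γ s) (of Γ t) := by
  have h_rel := PresentedGroup.one_of_mem (rels := raagRels Γ) ⟨s, t, h, rfl⟩
  rwa [map_commutatorElement, commutatorElement_eq_one_iff_commute] at h_rel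

lemma commute_of_of_mem_star {u v : V} (hu : u ∈ star Γ v) : Commute (of Γ v) (of Γ u) := by
  obtain rfl | hu := hu
  · exact Commute.refl _
  · exact commute_of_of hu

@[elab_as_elim]
lemma induction_right {p : RAAG Γ → Prop} (x : RAAG Γ) (one : p 1)
    (mul : ∀ x s (ε : ℤˣ), p x → p (x * of Γ s ^ (ε : ℤ))) : p x := by
  have hx : x ∈ Subgroup.closure (Set.range (PresentedGroup.of : V → RAAG Γ)) := by
    rw [PresentedGroup.closure_range_of]
    trivial
  induction hx using Subgroup.closure_induction_right with
  | one => exact one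
  | mul_right x _ _ h ih =>
    obtain ⟨s, rfl⟩ := h
    simpa [of] using mul x s 1 ih
  | mul_inv_cancel x _ _ h ih =>
    obtain ⟨s, rfl⟩ := h
    simpa [of] using mul x s (-1) ih

@[elab_as_elim]
lemma induction_of_mul_of_iff {p : RAAG Γ → Prop} (x : RAAG Γ) (one : p 1)
    (mul : ∀ x s, p (x * of Γ s) ↔ p x) : p x := by
  induction x using induction_right with
  | one => exact one
  | mul x s ε ih =>
    obtain rfl | rfl := Int.units_eq_one_or ε
    · simpa [mul] using ih
    · simpa [← mul (x * _) s] using ih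

/-- The standard parabolic subgroup generated by the vertices in `T`. -/
def parabolic (Γ : SimpleGraph V) (T : Set V) : Subgroup (RAAG Γ) :=
  Subgroup.closure (of Γ '' T)

/-- The parabolic subgroup generated by the neighbours of `v`; it is the stabilizer of each side of
the wall dual to the edge from `1` to `of Γ v`. -/
def link (Γ : SimpleGraph V) (v : V) : Subgroup (RAAG Γ) :=
  parabolic Γ (Γ.neighborSet v)

lemma of_mem_parabolic {T : Set V} {s : V} (h : s ∈ T) : of Γ s ∈ parabolic Γ T :=
  Subgroup.subset_closure ⟨s, h, rfl⟩

lemma parabolic_mono {T T' : Set V} (h : T ⊆ T') : parabolic Γ T ≤ parabolic Γ T' :=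
  Subgroup.closure_mono (Set.image_mono h)

lemma parabolic_le {T : Set V} {K : Subgroup (RAAG Γ)} :
    parabolic Γ T ≤ K ↔ ∀ s ∈ T, of Γ s ∈ K := by
  rw [parabolic, Subgroup.closure_le, Set.image_subset_iff]
  rfl

lemma zpow_mem_parabolic_compl {v s : V} (h : s ≠ v) (n : ℤ) :
    of Γ s ^ n ∈ parabolic Γ {v}ᶜ :=
  zpow_mem (of_mem_parabolic h) n

lemma link_le_parabolic_compl (v : V) : link Γ v ≤ parabolic Γ {v}ᶜ :=
  parabolic_mono fun _ h => (Γ.ne_of_adj h).symm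

lemma commute_of_mem_link {v : V} {x : RAAG Γ} (hx : x ∈ link Γ v) : Commute (of Γ v) x := by
  have h_le : link Γ v ≤ Subgroup.centralizer {of Γ v} :=
    parabolic_le.2 fun s hs =>
      Subgroup.mem_centralizer_singleton_iff.2 (commute_of_of hs).symm.eq
  exact (Subgroup.mem_centralizer_singleton_iff.1 (h_le hx)).symm

end Generators

/-! ### Crossing numbers -/

section Crossing

open Classical in
/-- Right translation by the generator `s`, with a counter that increases by one whenever the edge
traversed is dual to the wall between `1` and `of Γ v`. -/
noncomputable def step (Γ : SimpleGraph V) (v s : V) : Equiv.Perm (RAAG Γ × ℤ) where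
  toFun p := (p.1 * of Γ s, p.2 + if s = v ∧ p.1 ∈ link Γ v then 1 else 0)
  invFun p := (p.1 * (of Γ s)⁻¹, p.2 - if s = v ∧ p.1 * (of Γ s)⁻¹ ∈ link Γ v then 1 else 0)
  left_inv p := by simp
  right_inv p := by simp

open Classical in
lemma step_apply (v s : V) (p : RAAG Γ × ℤ) :
    step Γ v s p = (p.1 * of Γ s, p.2 + if s = v ∧ p.1 ∈ link Γ v then 1 else 0) :=
  rfl

lemma eq_and_mul_of_mem_link_iff {v s t : V} (h : Γ.Adj s t) (x : RAAG Γ) :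
    s = v ∧ x * of Γ t ∈ link Γ v ↔ s = v ∧ x ∈ link Γ v := by
  refine and_congr_right ?_
  rintro rfl
  exact Subgroup.mul_mem_cancel_right _ (of_mem_parabolic h)

open Classical in
lemma commute_step_step (v : V) {s t : V} (h : Γ.Adj s t) :
    Commute (step Γ v s) (step Γ v t) := by
  ext1 p
  simp only [Equiv.Perm.mul_apply, step_apply, mul_assoc, (commute_of_of h).eq,
    eq_and_mul_of_mem_link_iff h, eq_and_mul_of_mem_link_iff h.symm, Prod.mk.injEq, true_and]
  ring

/-- The right action of `RAAG Γ` on `RAAG Γ × ℤ` in which the generators act by `step Γ v`. -/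
noncomputable def walk (Γ : SimpleGraph V) (v : V) : RAAG Γ →* (Equiv.Perm (RAAG Γ × ℤ))ᵐᵒᵖ :=
  lift (fun s => .op (step Γ v s)) fun _ _ h => (commute_step_step v h).op

/-- The algebraic number of times an edge path from `1` to `x` crosses the wall between `1` and
`of Γ v`. -/
noncomputable def crossing (v : V) (x : RAAG Γ) : ℤ :=
  ((walk Γ v x).unop (1, 0)).2

lemma walk_mul_of_apply (v s : V) (x : RAAG Γ) (p : RAAG Γ × ℤ) :
    (walk Γ v (x * of Γ s)).unop p = step Γ v s ((walk Γ v x).unop p) := by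
  simp [walk]

lemma walk_apply_fst (v : V) (x : RAAG Γ) (p : RAAG Γ × ℤ) :
    ((walk Γ v x).unop p).1 = p.1 * x := by
  induction x using induction_of_mul_of_iff with
  | one => simp
  | mul x s => rw [walk_mul_of_apply, step_apply, ← mul_assoc, mul_left_inj]

open Classical in
lemma crossing_mul_of (v s : V) (x : RAAG Γ) :
    crossing v (x * of Γ s) = crossing v x + if s = v ∧ x ∈ link Γ v then 1 else 0 := by
  rw [crossing, walk_mul_of_apply, step_apply, walk_apply_fst, one_mul]
  rfl

@[simp]
lemma crossing_one (v : V) : crossing v (1 : RAAG Γ) = 0 := by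
  simp [crossing]

lemma crossing_mul_of_mem_parabolic {v : V} {T : Set V} (hv : v ∉ T) {l : RAAG Γ}
    (hl : l ∈ parabolic Γ T) (x : RAAG Γ) : crossing v (x * l) = crossing v x := by
  induction hl using Subgroup.closure_induction generalizing x with
  | mem y hy =>
    obtain ⟨s, hs, rfl⟩ := hy
    simp [crossing_mul_of, ne_of_mem_of_not_mem hs hv]
  | one => simp
  | mul y z _ _ hy hz => rw [← mul_assoc, hz, hy]
  | inv y _ hy => simpa using (hy (x * y⁻¹)).symm

lemma crossing_of_mem_link {v : V} {x : RAAG Γ} (hx : x ∈ link Γ v) : crossing v x = 0 := by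
  simpa using crossing_mul_of_mem_parabolic (Γ.notMem_neighborSet_self (a := v)) hx 1

lemma crossing_link_mul {v : V} {l : RAAG Γ} (hl : l ∈ link Γ v) (x : RAAG Γ) :
    crossing v (l * x) = crossing v x := by
  induction x using induction_of_mul_of_iff with
  | one => simp [crossing_of_mem_link hl]
  | mul x s =>
    rw [← mul_assoc, crossing_mul_of, crossing_mul_of, Subgroup.mul_mem_cancel_left _ hl,
      add_left_inj]

end Crossing

/-! ### Halfspaces -/

section Halfspace

/-- The side containing `a * of Γ v` of the wall dual to the edge from `a` to `a * of Γ v`. -/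
def posHalfspace (v : V) (a : RAAG Γ) : Set (RAAG Γ) :=
  {x | crossing v (a⁻¹ * x) = 1}

lemma mul_of_mem_posHalfspace {v t : V} {a x : RAAG Γ} :
    x * of Γ t ∈ posHalfspace v a ↔ x ∈ posHalfspace v a ∨ t = v ∧ a⁻¹ * x ∈ link Γ v := by
  simp only [posHalfspace, Set.mem_ofPred_eq, ← mul_assoc, crossing_mul_of]
  split_ifs with h
  · simp [crossing_of_mem_link h.2, h]
  · simp [h]

/-- The side containing `a * of Γ v ^ ε` of the wall dual to the edge from `a` to
`a * of Γ v ^ ε`. -/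
def halfspace (v : V) (ε : ℤˣ) (a : RAAG Γ) : Set (RAAG Γ) :=
  if ε = 1 then posHalfspace v a else (posHalfspace v (a * (of Γ v)⁻¹))ᶜ

lemma halfspace_one (v : V) (a : RAAG Γ) : halfspace v 1 a = posHalfspace v a :=
  if_pos rfl

lemma halfspace_neg_one (v : V) (a : RAAG Γ) :
    halfspace v (-1) a = (posHalfspace v (a * (of Γ v)⁻¹))ᶜ :=
  if_neg (by decide)

variable {v s : V} {ε δ : ℤˣ} {a b x y : RAAG Γ}

lemma compl_halfspace (v : V) (ε : ℤˣ) (a : RAAG Γ) :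
    (halfspace v ε a)ᶜ = halfspace v (-ε) (a * of Γ v ^ (ε : ℤ)) := by
  obtain rfl | rfl := Int.units_eq_one_or ε <;> simp [halfspace_one, halfspace_neg_one]

lemma mem_halfspace_mul_left {g : RAAG Γ} :
    x ∈ halfspace v ε (g * a) ↔ g⁻¹ * x ∈ halfspace v ε a := by
  obtain rfl | rfl := Int.units_eq_one_or ε <;>
    simp [halfspace_one, halfspace_neg_one, posHalfspace, mul_assoc]

lemma mul_left_mem_halfspace_mul_left {g : RAAG Γ} :
    g * x ∈ halfspace v ε (g * a) ↔ x ∈ halfspace v ε a := by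
  simp [mem_halfspace_mul_left]

lemma self_notMem_halfspace (v : V) (ε : ℤˣ) (a : RAAG Γ) : a ∉ halfspace v ε a := by
  obtain rfl | rfl := Int.units_eq_one_or ε
  · simp [halfspace_one, posHalfspace]
  · have h : a * (of Γ v)⁻¹ * of Γ v ∈ posHalfspace v (a * (of Γ v)⁻¹) :=
      mul_of_mem_posHalfspace.2 (Or.inr ⟨rfl, by simp [one_mem]⟩)
    simpa [halfspace_neg_one] using h

lemma mul_zpow_mem_halfspace (v : V) (ε : ℤˣ) (a : RAAG Γ) :
    a * of Γ v ^ (ε : ℤ) ∈ halfspace v ε a := by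
  have h := self_notMem_halfspace v (-ε) (a * of Γ v ^ (ε : ℤ))
  rwa [← compl_halfspace, Set.notMem_compl_iff] at h

lemma mul_mem_halfspace_iff {T : Set V} (hv : v ∉ T) {l : RAAG Γ} (hl : l ∈ parabolic Γ T) :
    x * l ∈ halfspace v ε a ↔ x ∈ halfspace v ε a := by
  obtain rfl | rfl := Int.units_eq_one_or ε <;>
    simp [halfspace_one, halfspace_neg_one, posHalfspace, ← mul_assoc,
      crossing_mul_of_mem_parabolic hv hl]

lemma mul_zpow_mem_halfspace_iff (h : s ≠ v) (n : ℤ) :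
    x * of Γ s ^ n ∈ halfspace v ε a ↔ x ∈ halfspace v ε a :=
  mul_mem_halfspace_iff (T := {v}ᶜ) (by simp) (zpow_mem_parabolic_compl h n)

lemma eq_and_mem_link_of_enters (hx : x ∉ halfspace v ε a)
    (hxs : x * of Γ s ^ (δ : ℤ) ∈ halfspace v ε a) : s = v ∧ δ = ε ∧ a⁻¹ * x ∈ link Γ v := by
  obtain rfl | rfl := Int.units_eq_one_or ε <;> obtain rfl | rfl := Int.units_eq_one_or δ
  · simp_all [halfspace_one, mul_of_mem_posHalfspace]
  · simp only [halfspace_one, Units.val_neg, Units.val_one, zpow_neg, zpow_one] at hx hxs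
    exact absurd (mul_of_mem_posHalfspace (t := s).2 (Or.inl hxs)) (by simpa using hx)
  · simp_all [halfspace_neg_one, mul_of_mem_posHalfspace]
  · rw [halfspace_neg_one, Set.notMem_compl_iff] at hx
    simp only [halfspace_neg_one, Units.val_neg, Units.val_one, zpow_neg, zpow_one,
      Set.mem_compl_iff] at hxs
    rw [← inv_mul_cancel_right x (of Γ s), mul_of_mem_posHalfspace] at hx
    obtain ⟨rfl, h_link⟩ := hx.resolve_left hxs
    refine ⟨rfl, rfl, ?_⟩
    have h_comm := (commute_of_mem_link h_link).eq
    have h_eq : a⁻¹ * x = (a * (of Γ s)⁻¹)⁻¹ * (x * (of Γ s)⁻¹) := by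
      simpa [mul_assoc] using h_comm.symm
    rwa [h_eq]

lemma eq_and_mem_link_of_exits (hx : x ∈ halfspace v ε a)
    (hxs : x * of Γ s ^ (δ : ℤ) ∉ halfspace v ε a) :
    s = v ∧ δ = -ε ∧ (a * of Γ v ^ (ε : ℤ))⁻¹ * x ∈ link Γ v := by
  rw [← Set.notMem_compl_iff, compl_halfspace] at hx
  rw [← Set.mem_compl_iff, compl_halfspace] at hxs
  exact eq_and_mem_link_of_enters hx hxs

lemma mul_zpow_mem_halfspace_of_mem (hx : x ∈ halfspace v ε a) :
    x * of Γ v ^ (ε : ℤ) ∈ halfspace v ε a := by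
  by_contra h
  exact units_ne_neg_self ε (eq_and_mem_link_of_exits hx h).2.1

lemma posHalfspace_eq_of_mem_link (h : a⁻¹ * b ∈ link Γ v) :
    posHalfspace v a = posHalfspace v b := by
  ext x
  have h_cross := crossing_link_mul h (b⁻¹ * x)
  rw [mul_assoc, mul_inv_cancel_left] at h_cross
  simp only [posHalfspace, Set.mem_ofPred_eq, h_cross]

lemma halfspace_eq_iff : halfspace v ε a = halfspace v ε b ↔ a⁻¹ * b ∈ link Γ v := by
  constructor
  · intro h
    exact (eq_and_mem_link_of_enters (h ▸ self_notMem_halfspace v ε b)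
      (h ▸ mul_zpow_mem_halfspace v ε b)).2.2
  · intro h
    obtain rfl | rfl := Int.units_eq_one_or ε
    · simpa only [halfspace_one] using posHalfspace_eq_of_mem_link h
    · have h_conj : (a * (of Γ v)⁻¹)⁻¹ * (b * (of Γ v)⁻¹) = a⁻¹ * b := by
        rw [mul_inv_rev, inv_inv, mul_assoc, ← mul_assoc a⁻¹, ← mul_assoc,
          (commute_of_mem_link h).eq, mul_inv_cancel_right]
      rw [halfspace_neg_one, halfspace_neg_one, posHalfspace_eq_of_mem_link (h_conj ▸ h)]

end Halfspace

/-! ### Nested halfspaces and skewered walls -/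

section Nesting

variable {v s : V} {ε δ : ℤˣ} {a b x : RAAG Γ}

lemma mul_zpow_mem_halfspace_of_mem_inter (hvs : ¬ Γ.Adj v s)
    (ha : a * of Γ v ^ (ε : ℤ) ∉ halfspace s δ b) (hx : x ∈ halfspace v ε a)
    (hx' : x ∈ halfspace s δ b) (t : V) (η : ℤˣ) : x * of Γ t ^ (η : ℤ) ∈ halfspace v ε a := by
  by_contra h
  have h_link := (eq_and_mem_link_of_exits hx h).2.2
  rw [← mul_mem_halfspace_iff (T := Γ.neighborSet v) hvs h_link, mul_inv_cancel_left] at ha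
  exact ha hx'

lemma disjoint_halfspace (hvs : ¬ Γ.Adj v s) (ha : a * of Γ v ^ (ε : ℤ) ∉ halfspace s δ b)
    (hb : b * of Γ s ^ (δ : ℤ) ∉ halfspace v ε a) :
    Disjoint (halfspace v ε a) (halfspace s δ b) := by
  rw [Set.disjoint_left]
  intro x hx hx'
  have h_all (y : RAAG Γ) : x * y ∈ halfspace v ε a ∩ halfspace s δ b := by
    induction y using induction_right with
    | one => simpa using ⟨hx, hx'⟩
    | mul y t η ih =>
      rw [← mul_assoc]
      exact ⟨mul_zpow_mem_halfspace_of_mem_inter hvs ha ih.1 ih.2 t η,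
        mul_zpow_mem_halfspace_of_mem_inter (fun h => hvs h.symm) hb ih.2 ih.1 t η⟩
  have h_base := (h_all (x⁻¹ * a)).1
  rw [mul_inv_cancel_left] at h_base
  exact self_notMem_halfspace v ε a h_base

lemma halfspace_subset (hvs : ¬ Γ.Adj v s) (ha : a * of Γ v ^ (ε : ℤ) ∈ halfspace s δ b)
    (hb : b ∉ halfspace v ε a) : halfspace v ε a ⊆ halfspace s δ b := by
  rw [← Set.disjoint_compl_right_iff_subset, compl_halfspace]
  refine disjoint_halfspace hvs ?_ (by simpa using hb)
  rwa [← compl_halfspace, Set.notMem_compl_iff]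

lemma halfspace_mul_left_subset_iff (g : RAAG Γ) :
    halfspace v ε (g * a) ⊆ halfspace v ε (g * b) ↔ halfspace v ε a ⊆ halfspace v ε b := by
  constructor
  · intro h x hx
    exact mul_left_mem_halfspace_mul_left.1 (h (mul_left_mem_halfspace_mul_left (g := g).2 hx))
  · intro h x hx
    rw [mem_halfspace_mul_left] at hx ⊢
    exact h hx

lemma halfspace_mul_left_ssubset_iff (g : RAAG Γ) :
    halfspace v ε (g * a) ⊂ halfspace v ε (g * b) ↔ halfspace v ε a ⊂ halfspace v ε b := by
  simp only [ssubset_iff_subset_not_subset, halfspace_mul_left_subset_iff]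

end Nesting

section Separators

/-- The halfspaces bounded by walls labelled `v` that contain `y` but not `x`. -/
def separators (v : V) (x y : RAAG Γ) : Set (Set (RAAG Γ)) :=
  {U | (∃ ε a, U = halfspace v ε a) ∧ x ∉ U ∧ y ∈ U}

lemma finite_separators (v : V) (x y : RAAG Γ) : (separators v x y).Finite := by
  suffices h : ∀ z : RAAG Γ, (separators v x (x * z)).Finite by simpa using h (x⁻¹ * y)
  intro z
  induction z using induction_right with
  | one => simp [separators]
  | mul z s δ ih =>
    refine (ih.insert (halfspace v δ (x * z))).subset ?_
    rintro _ ⟨⟨ε, a, rfl⟩, hx, hy⟩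
    by_cases h_mem : x * z ∈ halfspace v ε a
    · exact Or.inr ⟨⟨ε, a, rfl⟩, hx, h_mem⟩
    · rw [← mul_assoc] at hy
      obtain ⟨-, rfl, h_link⟩ := eq_and_mem_link_of_enters h_mem hy
      exact Or.inl (halfspace_eq_iff.2 h_link)

lemma exists_lt_halfspace_eq {v : V} {ε : ℤˣ} {x y : RAAG Γ} (b : ℕ → RAAG Γ)
    (hx : ∀ i, x ∈ halfspace v ε (b i)) (hy : ∀ i, y ∉ halfspace v ε (b i)) :
    ∃ i j, i < j ∧ halfspace v ε (b i) = halfspace v ε (b j) :=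
  Set.Finite.exists_lt_map_eq_of_forall_mem (t := separators v y x)
    (fun i => ⟨⟨ε, b i, rfl⟩, hy i, hx i⟩) (finite_separators v y x)

end Separators

section Skewers

/-- `g` skewers the wall dual to the edge from `a` to `a * of Γ v ^ ε`: it translates the halfspace
`halfspace v ε a` strictly into itself. -/
def Skewers (v : V) (ε : ℤˣ) (g a : RAAG Γ) : Prop :=
  halfspace v ε (g * a) ⊂ halfspace v ε a

variable {v : V} {ε : ℤˣ} {g h a : RAAG Γ}

lemma skewers_conj (v : V) (ε : ℤˣ) (a : RAAG Γ) :
    Skewers v ε (a * of Γ v ^ (ε : ℤ) * a⁻¹) a := by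
  have h_notMem : a ∉ halfspace v ε (a * of Γ v ^ (ε : ℤ)) := fun h =>
    self_notMem_halfspace v ε _ (mul_zpow_mem_halfspace_of_mem h)
  have h_sub : halfspace v ε (a * of Γ v ^ (ε : ℤ)) ⊆ halfspace v ε a :=
    halfspace_subset (Γ.irrefl) (mul_zpow_mem_halfspace_of_mem (mul_zpow_mem_halfspace v ε a))
      h_notMem
  rw [Skewers, inv_mul_cancel_right]
  exact ⟨h_sub, fun h => self_notMem_halfspace v ε _ (h (mul_zpow_mem_halfspace v ε a))⟩

lemma skewers_of (v : V) : Skewers v 1 (of Γ v) 1 := by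
  simpa using skewers_conj (Γ := Γ) v 1 1

lemma Skewers.strictAnti (hg : Skewers v ε g a) :
    StrictAnti fun n : ℤ => halfspace v ε (g ^ n * a) := by
  refine strictAnti_int_of_succ_lt fun n => ?_
  rw [zpow_add_one, mul_assoc]
  exact (halfspace_mul_left_ssubset_iff _).2 hg

lemma Skewers.exists_notMem (hg : Skewers v ε g a) (x : RAAG Γ) :
    ∃ n : ℕ, x ∉ halfspace v ε (g ^ (n : ℤ) * a) := by
  by_contra! h_mem
  have h_notMem (n : ℕ) : a ∉ halfspace v ε (g ^ (n : ℤ) * a) := fun h => by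
    have h_zero := hg.strictAnti.antitone (Int.natCast_nonneg n) h
    rw [zpow_zero, one_mul] at h_zero
    exact self_notMem_halfspace v ε a h_zero
  obtain ⟨i, j, hij, h_eq⟩ := exists_lt_halfspace_eq _ h_mem h_notMem
  exact hij.ne (by exact_mod_cast hg.strictAnti.injective h_eq)

lemma Skewers.exists_mem (hg : Skewers v ε g a) (x : RAAG Γ) :
    ∃ n : ℕ, x ∈ halfspace v ε (g ^ (-n : ℤ) * a) := by
  by_contra! h_notMem
  have h_mem (n : ℕ) : a * of Γ v ^ (ε : ℤ) ∈ halfspace v ε (g ^ (-n : ℤ) * a) := by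
    refine hg.strictAnti.antitone (neg_nonpos.2 (Int.natCast_nonneg n)) ?_
    rw [zpow_zero, one_mul]
    exact mul_zpow_mem_halfspace v ε a
  obtain ⟨i, j, hij, h_eq⟩ := exists_lt_halfspace_eq _ h_mem h_notMem
  exact hij.ne (by exact_mod_cast neg_injective (hg.strictAnti.injective h_eq))

lemma Skewers.exists_mem_notMem_succ (hg : Skewers v ε g a) (x : RAAG Γ) :
    ∃ k : ℤ, x ∈ halfspace v ε (g ^ k * a) ∧ x ∉ halfspace v ε (g ^ (k + 1) * a) := by
  obtain ⟨n, hn⟩ := hg.exists_notMem x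
  obtain ⟨m, hm⟩ := hg.exists_mem x
  have h_bdd (k : ℤ) (hk : x ∈ halfspace v ε (g ^ k * a)) : k ≤ n := by
    by_contra! h
    exact hn (hg.strictAnti.antitone h.le hk)
  obtain ⟨k, hk, h_max⟩ := Int.exists_greatest_of_bdd ⟨n, h_bdd⟩ ⟨_, hm⟩
  exact ⟨k, hk, fun h => by linarith [h_max _ h]⟩

lemma exists_zpow_mul_mem_link {z : RAAG Γ} (hz : Commute (of Γ v) z) :
    ∃ n : ℤ, of Γ v ^ n * z ∈ link Γ v := by
  obtain ⟨k, hk, hk'⟩ := (skewers_of (Γ := Γ) v).exists_mem_notMem_succ z⁻¹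
  rw [mem_halfspace_mul_left] at hk hk'
  have h_step : (of Γ v ^ (k + 1))⁻¹ * z⁻¹ * of Γ v ^ ((1 : ℤˣ) : ℤ) = (of Γ v ^ k)⁻¹ * z⁻¹ := by
    rw [Units.val_one, zpow_one, mul_assoc, ← hz.inv_right.eq]
    group
  have h_link := (eq_and_mem_link_of_enters hk' (h_step ▸ hk)).2.2
  refine ⟨k + 1, ?_⟩
  rw [(hz.zpow_left (k + 1)).eq, ← inv_mem_iff]
  simpa using h_link

lemma mem_parabolic_star_of_commute {z : RAAG Γ} (hz : Commute (of Γ v) z) :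
    z ∈ parabolic Γ (star Γ v) := by
  obtain ⟨n, hn⟩ := exists_zpow_mul_mem_link hz
  have h_of : of Γ v ∈ parabolic Γ (star Γ v) := of_mem_parabolic (Set.mem_insert v _)
  exact (Subgroup.mul_mem_cancel_left _ (zpow_mem h_of n)).1
    (parabolic_mono (Set.subset_insert _ _) hn)

lemma Skewers.mul_left_of_commute (hg : Skewers v ε g a) (hgh : Commute g h) :
    Skewers v ε g (h * a) := by
  rw [Skewers, ← mul_assoc, hgh.eq, mul_assoc]
  exact (halfspace_mul_left_ssubset_iff h).2 hg

lemma exists_pow_mul_zpow_mem_link_of_forall_mem {x : RAAG Γ} (hgh : Commute g h) (k : ℕ → ℤ)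
    (h_mem : ∀ i : ℕ, x ∈ halfspace v ε (g ^ k i * (h ^ i * a)))
    (h_notMem : ∀ i : ℕ, x ∉ halfspace v ε (g ^ (k i + 1) * (h ^ i * a))) :
    ∃ i j : ℕ, i < j ∧ a⁻¹ * (h ^ (j - i) * g ^ (k j - k i)) * a ∈ link Γ v := by
  have h_notMem' (i : ℕ) : g⁻¹ * x ∉ halfspace v ε (g ^ k i * (h ^ i * a)) := by
    rw [← mem_halfspace_mul_left, ← mul_assoc, ← zpow_one_add, add_comm]
    exact h_notMem i
  obtain ⟨i, j, hij, h_eq⟩ := exists_lt_halfspace_eq _ h_mem h_notMem'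
  refine ⟨i, j, hij, ?_⟩
  have h_comm : Commute (g ^ (k j - k i)) (h ^ i) := (hgh.zpow_left _).pow_right _
  have h_comm' : Commute (g ^ (k j - k i)) (h ^ (j - i)) := (hgh.zpow_left _).pow_right _
  have h_quot : (g ^ k i * (h ^ i * a))⁻¹ * (g ^ k j * (h ^ j * a)) =
      a⁻¹ * (h ^ (j - i) * g ^ (k j - k i)) * a :=
    calc (g ^ k i * (h ^ i * a))⁻¹ * (g ^ k j * (h ^ j * a))
        = a⁻¹ * ((h ^ i)⁻¹ * (g ^ (k j - k i) * h ^ i) * h ^ (j - i)) * a := by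
          rw [← Nat.add_sub_cancel' hij.le, pow_add, Nat.add_sub_cancel' hij.le, sub_eq_neg_add,
            zpow_add]
          simp only [mul_inv_rev, zpow_neg, mul_assoc]
      _ = a⁻¹ * (h ^ (j - i) * g ^ (k j - k i)) * a := by
          rw [h_comm.eq, inv_mul_cancel_left, h_comm'.eq]
  rw [← h_quot]
  exact halfspace_eq_iff.1 h_eq

lemma Skewers.exists_pow_mul_zpow_mem_link (hg : Skewers v ε g a) (hgh : Commute g h) :
    ∃ m : ℕ, 0 < m ∧ ∃ k : ℤ, a⁻¹ * (h ^ m * g ^ k) * a ∈ link Γ v := by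
  choose k hk hk' using fun i : ℕ =>
    (hg.mul_left_of_commute (hgh.pow_right i)).exists_mem_notMem_succ 1
  obtain ⟨i, j, hij, h_link⟩ := exists_pow_mul_zpow_mem_link_of_forall_mem hgh k hk hk'
  exact ⟨j - i, Nat.sub_pos_of_lt hij, _, h_link⟩

lemma Skewers.exists_pow_mem_link (hg : Skewers v ε g a) (hgh : Commute g h) {x : RAAG Γ}
    (hx : x⁻¹ * h * x ∈ parabolic Γ {v}ᶜ) :
    ∃ m : ℕ, 0 < m ∧ a⁻¹ * h ^ m * a ∈ link Γ v := by
  obtain ⟨n, hn, hn'⟩ := hg.exists_mem_notMem_succ x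
  have h_iff (k : ℤ) (i : ℕ) : x ∈ halfspace v ε (g ^ k * (h ^ i * a)) ↔
      x ∈ halfspace v ε (g ^ k * a) := by
    have h_conj : (h ^ i)⁻¹ * x = x * (x⁻¹ * h * x) ^ (-i : ℤ) := by
      have h_pow : (x⁻¹ * h * x) ^ (-i : ℤ) = x⁻¹ * h ^ (-i : ℤ) * x := by
        simpa using conj_zpow (a := x⁻¹) (b := h) (i := -i)
      rw [h_pow]
      group
    rw [← mul_assoc, ((hgh.zpow_left k).pow_right i).eq, mul_assoc, mem_halfspace_mul_left, h_conj]
    exact mul_mem_halfspace_iff (by simp) (zpow_mem hx _)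
  obtain ⟨i, j, hij, h_link⟩ := exists_pow_mul_zpow_mem_link_of_forall_mem hgh (fun _ => n)
    (fun i => (h_iff n i).2 hn) (fun i => (h_iff (n + 1) i).not.2 hn')
  exact ⟨j - i, Nat.sub_pos_of_lt hij, by simpa using h_link⟩

end Skewers

section ExistsSkewers

variable {w : V}

lemma mem_parabolic_or_exists_mem_halfspace (w : V) (y : RAAG Γ) :
    y ∈ parabolic Γ {w}ᶜ ∨ ∃ b ∈ parabolic Γ {w}ᶜ, ∃ ε, y ∈ halfspace w ε b := by
  induction y using induction_right with
  | one => exact Or.inl (one_mem _)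
  | mul y s δ ih =>
    by_cases hs : s = w
    · subst hs
      rcases ih with hy | ⟨b, hb, ε, hy⟩
      · exact Or.inr ⟨y, hy, δ, mul_zpow_mem_halfspace s δ y⟩
      · by_cases hys : y * of Γ s ^ (δ : ℤ) ∈ halfspace s ε b
        · exact Or.inr ⟨b, hb, ε, hys⟩
        obtain ⟨-, rfl, h_link⟩ := eq_and_mem_link_of_exits hy hys
        left
        have h_eq : y * of Γ s ^ ((-ε : ℤˣ) : ℤ) = b * ((b * of Γ s ^ (ε : ℤ))⁻¹ * y) := by
          have h_comm := ((commute_of_mem_link h_link).zpow_left (ε : ℤ)).eq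
          calc y * of Γ s ^ ((-ε : ℤˣ) : ℤ)
              = b * (of Γ s ^ (ε : ℤ) * ((b * of Γ s ^ (ε : ℤ))⁻¹ * y)) *
                  of Γ s ^ ((-ε : ℤˣ) : ℤ) := by group
            _ = b * ((b * of Γ s ^ (ε : ℤ))⁻¹ * y) := by
                rw [h_comm, Units.val_neg, zpow_neg, ← mul_assoc, mul_inv_cancel_right]
        rw [h_eq]
        exact mul_mem hb (link_le_parabolic_compl s h_link)
    · rcases ih with hy | ⟨b, hb, ε, hy⟩
      · exact Or.inl (mul_mem hy (zpow_mem_parabolic_compl hs _))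
      · exact Or.inr ⟨b, hb, ε, (mul_zpow_mem_halfspace_iff hs _).2 hy⟩

/-- Moving a point across a wall `U` towards its image under `g` decreases the number of walls
separating the two if `g` translates `U` in the wrong direction. -/
lemma ncard_separators_lt {ε : ℤˣ} {g c : RAAG Γ} (hgc : g * c ∈ halfspace w ε c)
    (hc : c ∈ halfspace w ε (g * c)) :
    (separators w (c * of Γ w ^ (ε : ℤ)) (g * (c * of Γ w ^ (ε : ℤ)))).ncard <
      (separators w c (g * c)).ncard := by
  refine Set.ncard_lt_ncard ⟨?_, fun h => ?_⟩ (finite_separators _ _ _)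
  · rintro _ ⟨⟨η, d, rfl⟩, h_notMem, h_mem⟩
    refine ⟨⟨η, d, rfl⟩, fun h => ?_, ?_⟩
    · obtain ⟨-, rfl, h_link⟩ := eq_and_mem_link_of_exits h h_notMem
      rw [← halfspace_eq_iff (ε := -η), ← compl_halfspace] at h_link
      rw [← Set.notMem_compl_iff, h_link, ← mul_assoc] at h_mem
      exact h_mem (mul_zpow_mem_halfspace_of_mem hgc)
    · by_contra h
      rw [← mul_assoc] at h_mem
      obtain ⟨-, rfl, h_link⟩ := eq_and_mem_link_of_enters h h_mem
      rw [halfspace_eq_iff.2 h_link] at h_notMem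
      exact h_notMem (mul_zpow_mem_halfspace_of_mem hc)
  · have h_mem : halfspace w ε c ∈ separators w c (g * c) :=
      ⟨⟨ε, c, rfl⟩, self_notMem_halfspace w ε c, hgc⟩
    exact (h h_mem).2.1 (mul_zpow_mem_halfspace w ε c)

lemma exists_skewers {g : RAAG Γ} (hg : ∀ x : RAAG Γ, x⁻¹ * g * x ∉ parabolic Γ {w}ᶜ) :
    ∃ ε c, Skewers w ε g c := by
  let f (x : RAAG Γ) : ℕ := (separators w x (g * x)).ncard
  obtain ⟨x, hx⟩ : ∃ x, ∀ y, f x ≤ f y := ⟨_, fun y => Function.argmin_le f y⟩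
  obtain ⟨b, hb, ε, hbε⟩ := (mem_parabolic_or_exists_mem_halfspace w (x⁻¹ * g * x)).resolve_left
    (hg x)
  have h_inv (y a : RAAG Γ) (η : ℤˣ) : y * b ∈ halfspace w η a ↔ y ∈ halfspace w η a :=
    mul_mem_halfspace_iff (by simp) hb
  have hf : f (x * b) = f x := by
    simp only [f, separators]
    congr 1 with U
    refine and_congr_right ?_
    rintro ⟨η, a, rfl⟩
    rw [← mul_assoc, h_inv, h_inv]
  have hgc : g * (x * b) ∈ halfspace w ε (x * b) := by
    rwa [mem_halfspace_mul_left, ← mul_assoc, ← mul_assoc, h_inv]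
  have hc : x * b ∉ halfspace w ε (g * (x * b)) := fun hc =>
    (ncard_separators_lt hgc hc).not_ge (hf.trans_le (hx _))
  refine ⟨ε, x * b, halfspace_subset Γ.irrefl (mul_zpow_mem_halfspace_of_mem hgc) hc, fun h => ?_⟩
  exact self_notMem_halfspace w ε _ (h hgc)

end ExistsSkewers

/-! ### Exponents -/

section Exponent

open Classical in
/-- The vector of exponent sums of the generators in `x`, i.e. the image of `x` in the rational
abelianization of `RAAG Γ`. -/
noncomputable def exponent (x : RAAG Γ) : V → ℚ :=
  (lift (Γ := Γ) (fun v => Multiplicative.ofAdd (Pi.single v 1 : V → ℚ))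
    (fun _ _ _ => Commute.all _ _) x).toAdd

@[simp]
lemma exponent_one : exponent (1 : RAAG Γ) = 0 := by
  simp [exponent]

@[simp]
lemma exponent_mul (x y : RAAG Γ) : exponent (x * y) = exponent x + exponent y := by
  simp [exponent]

@[simp]
lemma exponent_inv (x : RAAG Γ) : exponent x⁻¹ = -exponent x := by
  simp [exponent]

@[simp]
lemma exponent_zpow (x : RAAG Γ) (n : ℤ) : exponent (x ^ n) = (n : ℚ) • exponent x := by
  simp [exponent, Int.cast_smul_eq_zsmul]

@[simp]
lemma exponent_pow (x : RAAG Γ) (n : ℕ) : exponent (x ^ n) = (n : ℚ) • exponent x :=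
  mod_cast exponent_zpow x n

lemma exponent_of [DecidableEq V] (v : V) : exponent (of Γ v) = Pi.single v 1 := by
  simp only [exponent, lift_of, toAdd_ofAdd]
  congr!

@[simp]
lemma exponent_of_self (v : V) : exponent (of Γ v) v = 1 := by
  classical simp [exponent_of]

lemma exponent_of_of_ne {v w : V} (h : w ≠ v) : exponent (of Γ v) w = 0 := by
  classical simp [exponent_of, h]

lemma exists_intCast_eq_exponent (x : RAAG Γ) (v : V) : ∃ n : ℤ, n = exponent x v := by
  classical
  induction x using induction_right with
  | one => exact ⟨0, by simp⟩
  | mul x s ε ih =>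
    obtain ⟨n, hn⟩ := ih
    exact ⟨n + ε * (Pi.single s 1 : V → ℤ) v, by simp [hn, exponent_of, Pi.single_apply]⟩

lemma exponent_eq_zero_of_mem_parabolic {T : Set V} {x : RAAG Γ} (hx : x ∈ parabolic Γ T) {v : V}
    (hv : v ∉ T) : exponent x v = 0 := by
  induction hx using Subgroup.closure_induction with
  | mem _ h =>
    obtain ⟨s, hs, rfl⟩ := h
    exact exponent_of_of_ne (ne_of_mem_of_not_mem hs hv).symm
  | one => simp
  | mul _ _ _ _ hx hy => simp [hx, hy]
  | inv _ _ hx => simp [hx]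

lemma mem_link_of_commute {v : V} {z : RAAG Γ} (hz : Commute (of Γ v) z)
    (h_zero : exponent z v = 0) : z ∈ link Γ v := by
  obtain ⟨n, hn⟩ := exists_zpow_mul_mem_link hz
  obtain rfl : n = 0 := by
    simpa [h_zero] using exponent_eq_zero_of_mem_parabolic hn (Γ.notMem_neighborSet_self (a := v))
  simpa using hn

end Exponent

/-! ### Supports -/

section Support

open Classical in
/-- The retraction of `RAAG Γ` onto a standard parabolic subgroup that kills the other
generators. -/
noncomputable def retraction (Γ : SimpleGraph V) (T : Set V) : RAAG Γ →* RAAG Γ :=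
  lift (fun s => if s ∈ T then of Γ s else 1) fun s t h => by
    split_ifs <;> simp [commute_of_of h]

lemma retraction_of_mem {T : Set V} {s : V} (hs : s ∈ T) : retraction Γ T (of Γ s) = of Γ s := by
  simp [retraction, hs]

lemma retraction_of_notMem {T : Set V} {s : V} (hs : s ∉ T) : retraction Γ T (of Γ s) = 1 := by
  simp [retraction, hs]

lemma retraction_eq_self {T : Set V} {x : RAAG Γ} (hx : x ∈ parabolic Γ T) :
    retraction Γ T x = x := by
  have h_le : parabolic Γ T ≤ (retraction Γ T).eqLocus (MonoidHom.id _) :=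
    parabolic_le.2 fun _ hs => retraction_of_mem hs
  exact h_le hx

lemma retraction_mem_parabolic_inter {T T' : Set V} {x : RAAG Γ} (hx : x ∈ parabolic Γ T') :
    retraction Γ T x ∈ parabolic Γ (T ∩ T') := by
  have h_le : parabolic Γ T' ≤ (parabolic Γ (T ∩ T')).comap (retraction Γ T) := by
    refine parabolic_le.2 fun s hs => Subgroup.mem_comap.2 ?_
    by_cases h : s ∈ T
    · rw [retraction_of_mem h]
      exact of_mem_parabolic ⟨h, hs⟩
    · rw [retraction_of_notMem h]
      exact one_mem _
  exact h_le hx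

lemma exists_conj_mem_parabolic_inter {T T' : Set V} {g x y : RAAG Γ}
    (hx : x⁻¹ * g * x ∈ parabolic Γ T) (hy : y⁻¹ * g * y ∈ parabolic Γ T') :
    ∃ z : RAAG Γ, z⁻¹ * g * z ∈ parabolic Γ (T ∩ T') := by
  have h_eq : retraction Γ T (y⁻¹ * g * y) = (x * retraction Γ T (x⁻¹ * y))⁻¹ * g *
      (x * retraction Γ T (x⁻¹ * y)) := calc
    _ = retraction Γ T ((x⁻¹ * y)⁻¹ * (x⁻¹ * g * x) * (x⁻¹ * y)) := by congr 1; group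
    _ = (retraction Γ T (x⁻¹ * y))⁻¹ * (x⁻¹ * g * x) * retraction Γ T (x⁻¹ * y) := by
      rw [map_mul, map_mul, map_inv, retraction_eq_self hx]
    _ = _ := by group
  exact ⟨_, h_eq ▸ retraction_mem_parabolic_inter hy⟩

/-- The vertices that occur in every element conjugate to `g`. -/
def support (g : RAAG Γ) : Set V :=
  {w | ∀ x : RAAG Γ, x⁻¹ * g * x ∉ parabolic Γ {w}ᶜ}

lemma exists_conj_mem_parabolic_compl {g : RAAG Γ} {F : Set V} (hF : F.Finite)
    (h_disj : Disjoint F (support g)) : ∃ x : RAAG Γ, x⁻¹ * g * x ∈ parabolic Γ Fᶜ := by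
  induction F, hF using Set.Finite.induction_on with
  | empty =>
    refine ⟨1, ?_⟩
    induction 1⁻¹ * g * 1 using induction_right with
    | one => exact one_mem _
    | mul y s ε ih => exact mul_mem ih (zpow_mem (of_mem_parabolic (by simp)) _)
  | @insert w F _ _ ih =>
    rw [Set.disjoint_insert_left] at h_disj
    obtain ⟨x, hx⟩ := ih h_disj.2
    obtain ⟨y, hy⟩ : ∃ y : RAAG Γ, y⁻¹ * g * y ∈ parabolic Γ {w}ᶜ := by
      simpa [support] using h_disj.1
    rw [Set.insert_eq, Set.compl_union]
    exact exists_conj_mem_parabolic_inter hy hx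

lemma exists_conj_mem_parabolic_support [Finite V] (g : RAAG Γ) :
    ∃ x : RAAG Γ, x⁻¹ * g * x ∈ parabolic Γ (support g) := by
  simpa using exists_conj_mem_parabolic_compl (Set.toFinite (support g)ᶜ) disjoint_compl_left

end Support

/-! ### Ranks of centralizers -/

section CentralizerSpan

variable {g : RAAG Γ} {w w' : V}

/-- The span of the exponent vectors of all elements commuting with `g`; its dimension is the
invariant of automorphisms that detects the degree of a vertex. -/
def centralizerSpan (g : RAAG Γ) : Submodule ℚ (V → ℚ) :=
  Submodule.span ℚ (exponent '' {h | Commute g h})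

lemma exponent_mem_centralizerSpan {h : RAAG Γ} (hgh : Commute g h) :
    exponent h ∈ centralizerSpan g :=
  Submodule.subset_span ⟨h, hgh, rfl⟩

variable [Finite V]

lemma spanSubset_eq_span (Γ : SimpleGraph V) (T : Set V) :
    Pi.spanSubset ℚ T = Submodule.span ℚ ((fun s => exponent (of Γ s)) '' T) := by
  classical
  simp only [Pi.spanSubset, Pi.basisFun_apply, exponent_of]

lemma exponent_mem_spanSubset {T : Set V} {x y : RAAG Γ} (h : x⁻¹ * y * x ∈ parabolic Γ T) :
    exponent y ∈ Pi.spanSubset ℚ T := by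
  rw [Pi.mem_spanSubset_iff]
  intro v hv
  simpa using exponent_eq_zero_of_mem_parabolic h hv

lemma finrank_span_singleton_sup_spanSubset_le (f : V → ℚ) (T : Set V) :
    Module.finrank ℚ ↥(ℚ ∙ f ⊔ Pi.spanSubset ℚ T) ≤ T.ncard + 1 := by
  have h_sup := Submodule.finrank_add_le_finrank_add_finrank (ℚ ∙ f) (Pi.spanSubset ℚ T)
  have h_span : Module.finrank ℚ (ℚ ∙ f) ≤ 1 := by
    simpa using finrank_span_le_card (R := ℚ) {f}
  rw [Pi.dim_spanSubset] at h_sup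
  lia

lemma eq_of_single_mem_sup_spanSubset [DecidableEq V] {f : V → ℚ} {T : Set V} {i j : V}
    (hi : i ∉ T) (hj : j ∉ T) (hi' : Pi.single i 1 ∈ ℚ ∙ f ⊔ Pi.spanSubset ℚ T)
    (hj' : Pi.single j 1 ∈ ℚ ∙ f ⊔ Pi.spanSubset ℚ T) : i = j := by
  by_contra hij
  obtain ⟨_, hy, f₁, hf₁, h₁⟩ := Submodule.mem_sup.1 hi'
  obtain ⟨c₁, rfl⟩ := Submodule.mem_span_singleton.1 hy
  obtain ⟨_, hy, f₂, hf₂, h₂⟩ := Submodule.mem_sup.1 hj'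
  obtain ⟨c₂, rfl⟩ := Submodule.mem_span_singleton.1 hy
  rw [Pi.mem_spanSubset_iff] at hf₁ hf₂
  have h₁i : c₁ * f i = 1 := by simpa [hf₁ i hi] using congrFun h₁ i
  have h₁j : c₁ = 0 ∨ f j = 0 := by simpa [hf₁ j hj, Ne.symm hij] using congrFun h₁ j
  have h₂j : c₂ * f j = 1 := by simpa [hf₂ j hj] using congrFun h₂ j
  grind

lemma ncard_neighborSet_lt_finrank_centralizerSpan_of (v : V) :
    (Γ.neighborSet v).ncard < Module.finrank ℚ (centralizerSpan (of Γ v)) := by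
  have h_le : Pi.spanSubset ℚ (star Γ v) ≤ centralizerSpan (of Γ v) := by
    rw [spanSubset_eq_span Γ, Submodule.span_le]
    rintro _ ⟨s, hs, rfl⟩
    exact exponent_mem_centralizerSpan (commute_of_of_mem_star hs)
  calc (Γ.neighborSet v).ncard < (star Γ v).ncard :=
        Set.ncard_lt_ncard (Set.ssubset_insert Γ.notMem_neighborSet_self)
    _ ≤ _ := by simpa [Pi.dim_spanSubset] using Submodule.finrank_mono h_le

lemma exponent_mem_sup_spanSubset_of_pow_mul_zpow {h : RAAG Γ} {T : Set V} {m : ℕ} (hm : 0 < m)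
    {k : ℤ} (h_mem : exponent (h ^ m * g ^ k) ∈ Pi.spanSubset ℚ T) :
    exponent h ∈ ℚ ∙ exponent g ⊔ Pi.spanSubset ℚ T := by
  have h_ne : (m : ℚ) ≠ 0 := mod_cast hm.ne'
  rw [← Submodule.smul_mem_iff _ h_ne]
  have h_eq : (m : ℚ) • exponent h = (-k : ℚ) • exponent g + exponent (h ^ m * g ^ k) := by
    simp
  rw [h_eq]
  exact Submodule.add_mem_sup (Submodule.smul_mem _ _ (Submodule.mem_span_singleton_self _)) h_mem

lemma centralizerSpan_le (hw : w ∈ support g) :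
    centralizerSpan g ≤ ℚ ∙ exponent g ⊔ Pi.spanSubset ℚ (Γ.neighborSet w) := by
  obtain ⟨ε, a, hg⟩ := exists_skewers hw
  rw [centralizerSpan, Submodule.span_le]
  rintro _ ⟨h, hgh, rfl⟩
  obtain ⟨m, hm, k, hk⟩ := hg.exists_pow_mul_zpow_mem_link hgh
  exact exponent_mem_sup_spanSubset_of_pow_mul_zpow hm (exponent_mem_spanSubset hk)

lemma finrank_centralizerSpan_le (hw : w ∈ support g) :
    Module.finrank ℚ (centralizerSpan g) ≤ (Γ.neighborSet w).ncard + 1 :=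
  (Submodule.finrank_mono (centralizerSpan_le hw)).trans
    (finrank_span_singleton_sup_spanSubset_le _ _)

lemma centralizerSpan_le_of_not_adj (hw : w ∈ support g) (hw' : w' ∈ support g)
    (h_adj : ¬ Γ.Adj w w') :
    centralizerSpan g ≤
      ℚ ∙ exponent g ⊔ Pi.spanSubset ℚ (Γ.neighborSet w ∩ Γ.neighborSet w') := by
  obtain ⟨ε, a, hg⟩ := exists_skewers hw
  obtain ⟨ε', a', hg'⟩ := exists_skewers hw'
  rw [centralizerSpan, Submodule.span_le]
  rintro _ ⟨h, hgh : Commute g h, rfl⟩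
  obtain ⟨m, hm, k, hk⟩ := hg.exists_pow_mul_zpow_mem_link hgh
  have h_comm : Commute g (h ^ m * g ^ k) := (hgh.pow_right m).mul_right (Commute.self_zpow g k)
  have h_avoid : a⁻¹ * (h ^ m * g ^ k) * a ∈ parabolic Γ {w'}ᶜ :=
    parabolic_mono (Set.subset_compl_singleton_iff.2 h_adj) hk
  obtain ⟨m', hm', hk'⟩ := hg'.exists_pow_mem_link h_comm h_avoid
  refine exponent_mem_sup_spanSubset_of_pow_mul_zpow hm (k := k) ?_
  have h_mem := exponent_mem_spanSubset hk
  have h_mem' := exponent_mem_spanSubset hk'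
  rw [exponent_pow, Submodule.smul_mem_iff _ (mod_cast hm'.ne')] at h_mem'
  rw [Pi.mem_spanSubset_iff] at h_mem h_mem' ⊢
  intro v hv
  by_cases hvw : v ∈ Γ.neighborSet w
  · exact h_mem' v fun hvw' => hv ⟨hvw, hvw'⟩
  · exact h_mem v hvw

lemma finrank_centralizerSpan_le_of_adj {z : V} (hw : w ∈ support g) (hw' : w' ∈ support g)
    (h_adj : Γ.Adj w w') (hz : Γ.Adj w z) (hz' : z ∉ star Γ w') :
    Module.finrank ℚ (centralizerSpan g) ≤ (Γ.neighborSet w).ncard := by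
  classical
  obtain ⟨hz_ne, hz_adj⟩ := not_or.1 hz'
  by_contra! h_lt
  have h_eq := Submodule.eq_of_le_of_finrank_le (centralizerSpan_le hw)
    ((finrank_span_singleton_sup_spanSubset_le _ _).trans h_lt)
  have h_le : Pi.spanSubset ℚ (Γ.neighborSet w) ≤
      ℚ ∙ exponent g ⊔ Pi.spanSubset ℚ (Γ.neighborSet w') :=
    (le_sup_right.trans h_eq.ge).trans (centralizerSpan_le hw')
  have h_single {s : V} (hs : Γ.Adj w s) :
      Pi.single s 1 ∈ ℚ ∙ exponent g ⊔ Pi.spanSubset ℚ (Γ.neighborSet w') :=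
    h_le (Submodule.subset_span ⟨s, hs, Pi.basisFun_apply _ _ _⟩)
  exact hz_ne (eq_of_single_mem_sup_spanSubset hz_adj Γ.notMem_neighborSet_self
    (h_single hz) (h_single h_adj))

lemma finrank_centralizerSpan_le_of_notMem_star {z : V} (hw : w ∈ support g) (hw' : w' ∈ support g)
    (hz : Γ.Adj w z) (hz' : z ∉ star Γ w') :
    Module.finrank ℚ (centralizerSpan g) ≤ (Γ.neighborSet w).ncard := by
  by_cases h_adj : Γ.Adj w w'
  · exact finrank_centralizerSpan_le_of_adj hw hw' h_adj hz hz'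
  have h_inter : (Γ.neighborSet w ∩ Γ.neighborSet w').ncard < (Γ.neighborSet w).ncard :=
    Set.ncard_lt_ncard ⟨Set.inter_subset_left, fun h => hz' (Or.inr (h hz).2)⟩
  calc _ ≤ (Γ.neighborSet w ∩ Γ.neighborSet w').ncard + 1 :=
        (Submodule.finrank_mono (centralizerSpan_le_of_not_adj hw hw' h_adj)).trans
          (finrank_span_singleton_sup_spanSubset_le _ _)
    _ ≤ _ := h_inter

end CentralizerSpan

section Automorphism

variable [Finite V]

/-- The linear map on exponent vectors induced by an endomorphism of `RAAG Γ`. -/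
noncomputable def exponentMap (φ : RAAG Γ →* RAAG Γ) : (V → ℚ) →ₗ[ℚ] (V → ℚ) :=
  (Pi.basisFun ℚ V).constr ℚ fun v => exponent (φ (of Γ v))

lemma exponentMap_exponent (φ : RAAG Γ →* RAAG Γ) (x : RAAG Γ) :
    exponentMap φ (exponent x) = exponent (φ x) := by
  classical
  have h_of (s : V) : exponentMap φ (exponent (of Γ s)) = exponent (φ (of Γ s)) := by
    rw [exponent_of, ← Pi.basisFun_apply, exponentMap, Module.Basis.constr_basis]
  induction x using induction_right with
  | one => simp
  | mul x s ε ih => simp [ih, h_of]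

lemma exponentMap_comp_of_leftInverse {φ ψ : RAAG Γ →* RAAG Γ} (h : Function.LeftInverse ψ φ) :
    exponentMap ψ ∘ₗ exponentMap φ = LinearMap.id := by
  classical
  refine (Pi.basisFun ℚ V).ext fun v => ?_
  rw [Pi.basisFun_apply, ← exponent_of (Γ := Γ), LinearMap.comp_apply, exponentMap_exponent,
    exponentMap_exponent, h, LinearMap.id_apply]

/-- The linear automorphism of the space of exponent vectors induced by an automorphism of
`RAAG Γ`. -/
noncomputable def exponentEquiv (φ : MulAut (RAAG Γ)) : (V → ℚ) ≃ₗ[ℚ] (V → ℚ) :=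
  LinearEquiv.ofLinearMap (exponentMap φ.toMonoidHom) (exponentMap φ.symm.toMonoidHom)
    (exponentMap_comp_of_leftInverse φ.apply_symm_apply)
    (exponentMap_comp_of_leftInverse φ.symm_apply_apply)

lemma exponentEquiv_exponent (φ : MulAut (RAAG Γ)) (x : RAAG Γ) :
    exponentEquiv φ (exponent x) = exponent (φ x) :=
  exponentMap_exponent φ.toMonoidHom x

lemma map_exponentEquiv_centralizerSpan (φ : MulAut (RAAG Γ)) (g : RAAG Γ) :
    (centralizerSpan g).map (exponentEquiv φ : (V → ℚ) →ₗ[ℚ] (V → ℚ)) =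
      centralizerSpan (φ g) := by
  rw [centralizerSpan, centralizerSpan, Submodule.map_span, Set.image_image]
  congr 1
  ext f
  constructor
  · rintro ⟨h, hgh : Commute g h, rfl⟩
    exact ⟨φ h, hgh.map φ, (exponentEquiv_exponent φ h).symm⟩
  · rintro ⟨h, hgh : Commute (φ g) h, rfl⟩
    refine ⟨φ.symm h, ?_, (exponentEquiv_exponent φ _).trans (by simp)⟩
    simpa using hgh.map φ.symm

lemma finrank_centralizerSpan_map (φ : MulAut (RAAG Γ)) (g : RAAG Γ) :
    Module.finrank ℚ (centralizerSpan (φ g)) = Module.finrank ℚ (centralizerSpan g) := by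
  rw [← map_exponentEquiv_centralizerSpan, LinearEquiv.finrank_map_eq]

lemma ncard_neighborSet_le_of_mem_support (φ : MulAut (RAAG Γ)) {v w : V}
    (hw : w ∈ support (φ (of Γ v))) : (Γ.neighborSet v).ncard ≤ (Γ.neighborSet w).ncard := by
  have h_lt := ncard_neighborSet_lt_finrank_centralizerSpan_of (Γ := Γ) v
  rw [← finrank_centralizerSpan_map φ] at h_lt
  exact Nat.le_of_lt_succ (h_lt.trans_le (finrank_centralizerSpan_le hw))

lemma ncard_neighborSet_lt_of_mem_support (φ : MulAut (RAAG Γ)) {v w w' z : V}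
    (hw : w ∈ support (φ (of Γ v))) (hw' : w' ∈ support (φ (of Γ v))) (hz : Γ.Adj w z)
    (hz' : z ∉ star Γ w') : (Γ.neighborSet v).ncard < (Γ.neighborSet w).ncard := by
  have h_lt := ncard_neighborSet_lt_finrank_centralizerSpan_of (Γ := Γ) v
  rw [← finrank_centralizerSpan_map φ] at h_lt
  exact h_lt.trans_le (finrank_centralizerSpan_le_of_notMem_star hw hw' hz hz')

lemma map_exponentEquiv_spanSubset (φ : MulAut (RAAG Γ)) (n : ℕ) :
    (Pi.spanSubset ℚ {w | n < (Γ.neighborSet w).ncard}).map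
        (exponentEquiv φ : (V → ℚ) →ₗ[ℚ] (V → ℚ)) =
      Pi.spanSubset ℚ {w | n < (Γ.neighborSet w).ncard} := by
  refine Submodule.eq_of_le_of_finrank_eq ?_ (LinearEquiv.finrank_map_eq _ _)
  nth_rw 1 [spanSubset_eq_span Γ]
  rw [Submodule.map_span_le]
  rintro _ ⟨v, hv, rfl⟩
  obtain ⟨x, hx⟩ := exists_conj_mem_parabolic_support (φ (of Γ v))
  have h_sub : support (φ (of Γ v)) ⊆ {w | n < (Γ.neighborSet w).ncard} := fun w hw =>
    hv.trans_le (ncard_neighborSet_le_of_mem_support φ hw)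
  rw [LinearEquiv.coe_coe, exponentEquiv_exponent]
  exact exponent_mem_spanSubset (parabolic_mono h_sub hx)

lemma support_map_of_subsingleton (hΓ : ∀ u v, Γ.neighborSet u ⊆ star Γ v → u = v)
    (φ : MulAut (RAAG Γ)) (v : V) : (support (φ (of Γ v))).Subsingleton := by
  by_contra h_not
  set T : Set V := {w | (Γ.neighborSet v).ncard < (Γ.neighborSet w).ncard}
  have h_sub : support (φ (of Γ v)) ⊆ T := fun w hw => by
    obtain ⟨w', hw', h_ne⟩ := (Set.not_subsingleton_iff.1 h_not).exists_ne w
    obtain ⟨z, hz, hz'⟩ := Set.not_subset.1 fun h => h_ne (hΓ w w' h).symm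
    exact ncard_neighborSet_lt_of_mem_support φ hw hw' hz hz'
  obtain ⟨x, hx⟩ := exists_conj_mem_parabolic_support (φ (of Γ v))
  have h_mem : exponent (φ (of Γ v)) ∈ Pi.spanSubset ℚ T :=
    exponent_mem_spanSubset (parabolic_mono h_sub hx)
  rw [← map_exponentEquiv_spanSubset φ, ← exponentEquiv_exponent] at h_mem
  have h_mem' : exponent (of Γ v) ∈ Pi.spanSubset ℚ T := by simpa using h_mem
  simpa using Pi.mem_spanSubset_iff.1 h_mem' v (by simp [T])

lemma exists_map_of_eq_conj (hΓ : ∀ u v, Γ.neighborSet u ⊆ star Γ v → u = v)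
    (φ : MulAut (RAAG Γ)) (v : V) :
    ∃ (w : V) (ε : ℤˣ) (x : RAAG Γ), φ (of Γ v) = x * of Γ w ^ (ε : ℤ) * x⁻¹ := by
  obtain ⟨x, hx⟩ := exists_conj_mem_parabolic_support (φ (of Γ v))
  obtain ⟨w, hw⟩ : ∃ w, support (φ (of Γ v)) ⊆ {w} := by
    obtain h | ⟨w, h⟩ := (support_map_of_subsingleton hΓ φ v).eq_empty_or_singleton
    · exact ⟨v, by simp [h]⟩
    · exact ⟨w, h.subset⟩
  obtain ⟨n, hn⟩ : ∃ n : ℤ, of Γ w ^ n = x⁻¹ * φ (of Γ v) * x := by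
    simpa [parabolic, Subgroup.mem_closure_singleton] using parabolic_mono hw hx
  have h_conj : φ (of Γ v) = x * of Γ w ^ n * x⁻¹ := by
    rw [hn]
    group
  obtain ⟨m, hm⟩ := exists_intCast_eq_exponent (φ.symm (of Γ w)) v
  have h_mul : (n * m : ℚ) = 1 := calc
    (n * m : ℚ) = exponent (φ.symm (φ (of Γ v))) v := by rw [h_conj]; simp [hm]
    _ = 1 := by simp
  exact ⟨w, Units.mkOfMulEqOne n m (mod_cast h_mul), x, h_conj⟩

end Automorphism

/-! ### Word length -/

section Length

/-- The element spelled by a word in the generators and their inverses. -/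
def wordProd (Γ : SimpleGraph V) (l : List (V × ℤˣ)) : RAAG Γ :=
  (l.map fun p => of Γ p.1 ^ (p.2 : ℤ)).prod

@[simp]
lemma wordProd_cons (p : V × ℤˣ) (l : List (V × ℤˣ)) :
    wordProd Γ (p :: l) = of Γ p.1 ^ (p.2 : ℤ) * wordProd Γ l :=
  rfl

lemma wordProd_surjective (Γ : SimpleGraph V) : Function.Surjective (wordProd Γ) := by
  intro x
  induction x using induction_right with
  | one => exact ⟨[], rfl⟩
  | mul x s ε ih =>
    obtain ⟨l, rfl⟩ := ih
    exact ⟨l ++ [(s, ε)], by simp [wordProd]⟩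

/-- The word length of an element with respect to the standard generators. -/
noncomputable def length (x : RAAG Γ) : ℕ :=
  sInf (List.length '' {l | wordProd Γ l = x})

lemma length_wordProd_le (l : List (V × ℤˣ)) : length (wordProd Γ l) ≤ l.length :=
  Nat.sInf_le ⟨l, rfl, rfl⟩

lemma exists_wordProd_eq_and_length_eq (x : RAAG Γ) :
    ∃ l, wordProd Γ l = x ∧ l.length = length x :=
  Nat.sInf_mem (Set.Nonempty.image _ (wordProd_surjective Γ x))

lemma exists_length_inv_mul_lt {x : RAAG Γ} (hx : x ≠ 1) :
    ∃ (s : V) (δ : ℤˣ), length ((of Γ s ^ (δ : ℤ))⁻¹ * x) < length x := by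
  obtain ⟨_ | ⟨⟨s, δ⟩, l⟩, rfl, hl⟩ := exists_wordProd_eq_and_length_eq x
  · exact absurd rfl hx
  · refine ⟨s, δ, ?_⟩
    rw [← hl, wordProd_cons, inv_mul_cancel_left]
    exact Nat.lt_succ_of_le (length_wordProd_le l)

variable {v : V} {ε : ℤˣ}

/-- A word that enters a halfspace contains a letter crossing its wall; translating the rest of the
path back across the wall deletes that letter. -/
lemma exists_wordProd_eq_conj_mul {a : RAAG Γ} {l : List (V × ℤˣ)} (h_one : 1 ∉ halfspace v ε a)
    (hl : wordProd Γ l ∈ halfspace v ε a) :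
    ∃ l', l'.length < l.length ∧
      wordProd Γ l' = (a * of Γ v ^ (ε : ℤ) * a⁻¹)⁻¹ * wordProd Γ l := by
  induction l generalizing a with
  | nil => exact absurd hl h_one
  | cons p l ih =>
    obtain ⟨s, δ⟩ := p
    by_cases hs : of Γ s ^ (δ : ℤ) ∈ halfspace v ε a
    · obtain ⟨rfl, rfl, h_link⟩ := eq_and_mem_link_of_enters h_one (by simpa using hs)
      have h_comm : Commute (of Γ s ^ (δ : ℤ)) a⁻¹ :=
        (commute_of_mem_link (by simpa using h_link)).zpow_left _
      refine ⟨l, by simp, ?_⟩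
      rw [mul_assoc a, h_comm.eq, mul_inv_cancel_left, wordProd_cons, inv_mul_cancel_left]
    · obtain ⟨l', h_lt, h_eq⟩ := ih (a := (of Γ s ^ (δ : ℤ))⁻¹ * a)
        (by simpa [mem_halfspace_mul_left] using hs)
        (by simpa [mem_halfspace_mul_left] using hl)
      refine ⟨(s, δ) :: l', by simpa using h_lt, ?_⟩
      rw [wordProd_cons, h_eq, wordProd_cons]
      group

lemma length_conj_mul_lt {a x : RAAG Γ} (h_one : 1 ∉ halfspace v ε a) (hx : x ∈ halfspace v ε a) :
    length ((a * of Γ v ^ (ε : ℤ) * a⁻¹)⁻¹ * x) < length x := by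
  obtain ⟨l, rfl, hl⟩ := exists_wordProd_eq_and_length_eq x
  obtain ⟨l', h_lt, h_eq⟩ := exists_wordProd_eq_conj_mul h_one hx
  rw [← h_eq, ← hl]
  exact (length_wordProd_le l').trans_lt h_lt

lemma mem_halfspace_of_length_inv_mul_lt {x : RAAG Γ}
    (hx : length ((of Γ v ^ (ε : ℤ))⁻¹ * x) < length x) : x ∈ halfspace v ε 1 := by
  by_contra h_notMem
  have h_mem : (of Γ v ^ (ε : ℤ))⁻¹ * x ∈ halfspace v (-ε) 1 := by
    rw [← Set.mem_compl_iff, compl_halfspace, one_mul] at h_notMem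
    rw [← mem_halfspace_mul_left, mul_one]
    exact h_notMem
  have h_lt := length_conj_mul_lt (self_notMem_halfspace v (-ε) 1) h_mem
  simp only [one_mul, inv_one, mul_one, Units.val_neg, zpow_neg, inv_inv, mul_inv_cancel_left]
    at h_lt
  exact lt_asymm h_lt hx

end Length

/-! ### Endomorphisms that conjugate every generator -/

section ConjugatesGenerators

/-- The endomorphism `φ` sends each generator `v` to its conjugate by `h v`. -/
def ConjugatesGenerators (φ : RAAG Γ →* RAAG Γ) (h : V → RAAG Γ) : Prop :=
  ∀ v, φ (of Γ v) = h v * of Γ v * (h v)⁻¹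

namespace ConjugatesGenerators

variable {φ : RAAG Γ →* RAAG Γ} {h : V → RAAG Γ}

lemma mul_zpow (hφ : ConjugatesGenerators φ h) (k : V → ℤ) :
    ConjugatesGenerators φ fun v => h v * of Γ v ^ k v := by
  intro v
  rw [hφ v, mul_inv_rev, mul_assoc (h v) _ (of Γ v), ((Commute.refl (of Γ v)).zpow_left _).eq]
  group

lemma exponent_map_of (hφ : ConjugatesGenerators φ h) (v : V) :
    exponent (φ (of Γ v)) = exponent (of Γ v) := by
  simp [hφ v]

lemma commute_conj (hφ : ConjugatesGenerators φ h) {v : V} {y : RAAG Γ}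
    (hy : Commute (of Γ v) y) : Commute (of Γ v) ((h v)⁻¹ * φ y * h v) := by
  have h_comm := (hy.map φ).map (MulAut.conj (h v)⁻¹).toMonoidHom
  simpa [hφ v, mul_assoc] using h_comm

lemma mem_halfspace_of_adj (hφ : ConjugatesGenerators φ h) {v w w' : V} (h_adj : Γ.Adj w w')
    (hw : w ∉ star Γ v) (hw' : w' ∉ star Γ v) {ε : ℤˣ} {a : RAAG Γ}
    (h_mem : h w ∈ halfspace v ε a) : h w' ∈ halfspace v ε a := by
  by_contra h_notMem
  obtain ⟨hw_ne, hw_adj⟩ := not_or.1 hw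
  have h_pow (i : ℕ) : φ (of Γ w) ^ i * h w = h w * of Γ w ^ (i : ℤ) := by
    rw [hφ w, conj_pow, zpow_natCast, inv_mul_cancel_right]
  have h_pow' (i : ℕ) : φ (of Γ w) ^ i * h w' = h w' * ((h w')⁻¹ * φ (of Γ w) * h w') ^ i := by
    have h_conj := conj_pow (i := i) (a := (h w')⁻¹) (b := φ (of Γ w))
    rw [inv_inv] at h_conj
    rw [h_conj]
    group
  have h_star : (h w')⁻¹ * φ (of Γ w) * h w' ∈ parabolic Γ (star Γ w') :=
    mem_parabolic_star_of_commute (hφ.commute_conj (commute_of_of h_adj.symm))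
  obtain ⟨i, j, hij, h_eq⟩ := exists_lt_halfspace_eq (fun i : ℕ => (φ (of Γ w) ^ i)⁻¹ * a)
    (v := v) (ε := ε) (x := h w) (y := h w')
    (fun i => by
      rw [mem_halfspace_mul_left, inv_inv, h_pow, mul_zpow_mem_halfspace_iff hw_ne]
      exact h_mem)
    (fun i => by
      rw [mem_halfspace_mul_left, inv_inv, h_pow', mul_mem_halfspace_iff
        (mem_star_comm.not.1 hw') (pow_mem h_star i)]
      exact h_notMem)
  have h_zero := exponent_eq_zero_of_mem_parabolic (halfspace_eq_iff.1 h_eq) hw_adj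
  have h_cast : (i : ℚ) = j := by
    simp only [exponent_mul, exponent_inv, exponent_pow, hφ.exponent_map_of, Pi.add_apply,
      Pi.neg_apply, Pi.smul_apply, exponent_of_self, smul_eq_mul] at h_zero
    linarith
  exact hij.ne (mod_cast h_cast)

lemma mem_halfspace_of_connectedOutsideStar (hφ : ConjugatesGenerators φ h) {v : V}
    (hv : connectedOutsideStar Γ v) {w w' : V} (hw : w ∉ star Γ v) (hw' : w' ∉ star Γ v) {ε : ℤˣ}
    {a : RAAG Γ} (h_mem : h w ∈ halfspace v ε a) : h w' ∈ halfspace v ε a := by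
  obtain ⟨p⟩ := hv ⟨w, hw⟩ ⟨w', hw'⟩
  suffices h_walk : ∀ x y : {z : V // z ∉ star Γ v},
      (Γ.induce {z : V | z ∉ star Γ v}).Walk x y →
        h x.1 ∈ halfspace v ε a → h y.1 ∈ halfspace v ε a from h_walk _ _ p h_mem
  intro x y p hx
  induction p with
  | nil => exact hx
  | @cons x y _ hxy _ ih => exact ih (hφ.mem_halfspace_of_adj hxy x.2 y.2 hx)

end ConjugatesGenerators

end ConjugatesGenerators

section Balanced

variable {φ : RAAG Γ →* RAAG Γ} {h : V → RAAG Γ}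

/-- For each `v`, the wall of `v` translated by `h v * of Γ v ^ n` does not separate `1` from any
`h w` with `w` outside the star of `v`. -/
def Balanced (h : V → RAAG Γ) : Prop :=
  ∀ v w, w ∉ star Γ v → ∀ (ε : ℤˣ) (n : ℤ),
    h w ∈ halfspace v ε (h v * of Γ v ^ n) → 1 ∈ halfspace v ε (h v * of Γ v ^ n)

lemma mem_halfspace_iff_of_forall_imp {v : V} {a x y : RAAG Γ}
    (h_imp : ∀ (ε : ℤˣ) (n : ℤ),
      x ∈ halfspace v ε (a * of Γ v ^ n) → y ∈ halfspace v ε (a * of Γ v ^ n)) (ε : ℤˣ) (n : ℤ) :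
    x ∈ halfspace v ε (a * of Γ v ^ n) ↔ y ∈ halfspace v ε (a * of Γ v ^ n) := by
  refine ⟨h_imp ε n, fun hy => ?_⟩
  by_contra hx
  rw [← Set.mem_compl_iff, compl_halfspace, mul_assoc, ← zpow_add] at hx
  have hy' := h_imp _ _ hx
  rw [zpow_add, ← mul_assoc, ← compl_halfspace] at hy'
  exact hy' hy

lemma Balanced.mem_halfspace_iff (hh : Balanced h) {v w : V} (hw : w ∉ star Γ v) (ε : ℤˣ) (n : ℤ) :
    h w ∈ halfspace v ε (h v * of Γ v ^ n) ↔ 1 ∈ halfspace v ε (h v * of Γ v ^ n) :=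
  mem_halfspace_iff_of_forall_imp (hh v w hw) ε n

/-- If a wall of `φ (of Γ v)` separates `1` from some `h w`, hence from all `h w` with `w` outside
the star of `v`, then conjugating by a power of `φ (of Γ v)` shortens all of these at once. -/
lemma ConjugatesGenerators.exists_sum_length_lt [Fintype V]
    (hΓ : ∀ u, connectedOutsideStar Γ u) (hφ : ConjugatesGenerators φ h) (hh : ¬ Balanced h) :
    ∃ q h', ConjugatesGenerators ((MulAut.conj q).toMonoidHom.comp φ) h' ∧
      ∑ v, length (h' v) < ∑ v, length (h v) := by
  classical
  simp only [Balanced, not_forall] at hh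
  obtain ⟨v, w, hw, ε, n, h_mem, h_one⟩ := hh
  obtain ⟨q, hq⟩ : ∃ q, q = φ ((of Γ v ^ (ε : ℤ))⁻¹) := ⟨_, rfl⟩
  have hq_conj : q = (h v * of Γ v ^ n * of Γ v ^ (ε : ℤ) * (h v * of Γ v ^ n)⁻¹)⁻¹ := by
    rw [hq, map_inv, map_zpow, hφ.mul_zpow (fun _ => n) v, conj_zpow]
  have h_comm {u : V} (hu : u ∈ star Γ v) : Commute q (φ (of Γ u)) := by
    rw [hq]
    exact (((commute_of_of_mem_star hu).zpow_left _).inv_left).map φ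
  have h_lt {u : V} (hu : u ∉ star Γ v) : length (q * h u) < length (h u) := by
    rw [hq_conj]
    exact length_conj_mul_lt h_one (hφ.mem_halfspace_of_connectedOutsideStar (hΓ v) hw hu h_mem)
  refine ⟨q, fun u => if u ∈ star Γ v then h u else q * h u, fun u => ?_, ?_⟩
  · change q * φ (of Γ u) * q⁻¹ = _
    beta_reduce
    split_ifs with hu
    · rw [(h_comm hu).eq, mul_inv_cancel_right, hφ u]
    · rw [hφ u]
      group
  · refine Finset.sum_lt_sum (fun u _ => ?_) ⟨w, Finset.mem_univ w, by simpa [hw] using h_lt hw⟩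
    beta_reduce
    split_ifs with hu
    · exact le_rfl
    · exact (h_lt hu).le

lemma ConjugatesGenerators.exists_balanced [Finite V] (hΓ : ∀ u, connectedOutsideStar Γ u)
    (hφ : ConjugatesGenerators φ h) :
    ∃ q h', ConjugatesGenerators ((MulAut.conj q).toMonoidHom.comp φ) h' ∧ Balanced h' := by
  have := Fintype.ofFinite V
  induction hn : ∑ v, length (h v) using Nat.strong_induction_on generalizing φ h with
  | _ n ih =>
    by_cases hh : Balanced h
    · exact ⟨1, h, by simpa [ConjugatesGenerators] using hφ, hh⟩
    obtain ⟨q, h', hφ', h_lt⟩ := hφ.exists_sum_length_lt hΓ hh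
    obtain ⟨q', h'', hφ'', hh''⟩ := ih _ (hn ▸ h_lt) hφ' rfl
    refine ⟨q' * q, h'', fun v => ?_, hh''⟩
    rw [← hφ'' v]
    simp [mul_assoc]

end Balanced

/-! ### Ping-pong -/

/-- A balanced choice of conjugators for `φ`, adjusted by powers of the generators so that `1` lies
between the walls of `φ (of Γ v)` based at `h v * (of Γ v)⁻¹` and at `h v`, for each `v`. -/
structure Normalized (φ : RAAG Γ →* RAAG Γ) (h : V → RAAG Γ) : Prop where
  conjugatesGenerators : ConjugatesGenerators φ h
  balanced : Balanced h
  one_mem_halfspace_iff (v : V) (ε : ℤˣ) (n : ℤ) :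
    1 ∈ halfspace v ε (h v * of Γ v ^ n) ↔ ε * n < 0

lemma antitone_halfspace_mul_zpow (v : V) (a : RAAG Γ) :
    Antitone fun n : ℤ => halfspace v 1 (a * of Γ v ^ n) := by
  have h_anti := (skewers_conj v 1 a).strictAnti.antitone
  simpa only [conj_zpow, inv_mul_cancel_right, Units.val_one, zpow_one] using h_anti

lemma one_mem_halfspace_mul_zpow_iff {v : V} {a : RAAG Γ}
    (h_mem : 1 ∈ halfspace v 1 (a * of Γ v ^ (-1 : ℤ))) (h_notMem : 1 ∉ halfspace v 1 a)
    (ε : ℤˣ) (n : ℤ) : 1 ∈ halfspace v ε (a * of Γ v ^ n) ↔ ε * n < 0 := by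
  have h_pos (n : ℤ) : 1 ∈ halfspace v 1 (a * of Γ v ^ n) ↔ n < 0 := by
    refine ⟨fun hn => ?_, fun hn => antitone_halfspace_mul_zpow v a (Int.le_sub_one_of_lt hn) h_mem⟩
    by_contra! h_nonneg
    exact h_notMem (by simpa using antitone_halfspace_mul_zpow v a h_nonneg hn)
  obtain rfl | rfl := Int.units_eq_one_or ε
  · simpa using h_pos n
  · have h_compl := compl_halfspace v 1 (a * of Γ v ^ (n - 1))
    rw [mul_assoc, ← zpow_add, Units.val_one, sub_add_cancel] at h_compl
    rw [← h_compl, Set.mem_compl_iff, h_pos, Units.val_neg, Units.val_one]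
    lia

lemma normalized_id (Γ : SimpleGraph V) :
    Normalized (MonoidHom.id (RAAG Γ)) fun _ => 1 where
  conjugatesGenerators v := by simp
  balanced v w _ ε n h_mem := h_mem
  one_mem_halfspace_iff v := one_mem_halfspace_mul_zpow_iff
    (by simpa using mul_zpow_mem_halfspace v 1 (of Γ v)⁻¹) (self_notMem_halfspace v 1 1)

lemma Balanced.exists_normalized {φ : RAAG Γ →* RAAG Γ} {h : V → RAAG Γ} (hh : Balanced h)
    (hφ : ConjugatesGenerators φ h) : ∃ h', Normalized φ h' := by
  have h_cross (v : V) : ∃ k : ℤ, 1 ∈ halfspace v 1 (h v * of Γ v ^ k) ∧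
      1 ∉ halfspace v 1 (h v * of Γ v ^ (k + 1)) := by
    simpa only [conj_zpow, inv_mul_cancel_right, Units.val_one, zpow_one] using
      (skewers_conj v 1 (h v)).exists_mem_notMem_succ 1
  choose k hk hk' using h_cross
  refine ⟨fun v => h v * of Γ v ^ (k v + 1), hφ.mul_zpow _, fun v w hw ε n h_mem => ?_,
    fun v => one_mem_halfspace_mul_zpow_iff ?_ (hk' v)⟩
  · rw [mul_assoc, ← zpow_add] at h_mem ⊢
    rw [mul_zpow_mem_halfspace_iff (not_or.1 hw).1] at h_mem
    exact hh v w hw ε _ h_mem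
  · rw [mul_assoc, ← zpow_add, add_neg_cancel_right]
    exact hk v

namespace Normalized

variable {φ : RAAG Γ →* RAAG Γ} {h : V → RAAG Γ}

lemma map_mul_mem_halfspace_self_iff (hφ : Normalized φ h) (s : V) (δ ε : ℤˣ) (n : ℤ)
    (z : RAAG Γ) :
    φ (of Γ s ^ (δ : ℤ)) * z ∈ halfspace s ε (h s * of Γ s ^ n) ↔
      z ∈ halfspace s ε (h s * of Γ s ^ (n - δ)) := by
  have h_eq : h s * of Γ s ^ n = φ (of Γ s ^ (δ : ℤ)) * (h s * of Γ s ^ (n - δ)) := by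
    rw [map_zpow, hφ.conjugatesGenerators s, conj_zpow]
    group
  rw [h_eq, mul_left_mem_halfspace_mul_left]

lemma map_mul_mem_halfspace_iff_of_adj (hφ : Normalized φ h) {v s : V} (h_adj : Γ.Adj v s)
    (δ ε : ℤˣ) (n : ℤ) (z : RAAG Γ) :
    φ (of Γ s ^ (δ : ℤ)) * z ∈ halfspace v ε (h v * of Γ v ^ n) ↔
      z ∈ halfspace v ε (h v * of Γ v ^ n) := by
  set a := h v * of Γ v ^ n
  have h_comm : Commute (of Γ v) (a⁻¹ * φ (of Γ s ^ (δ : ℤ)) * a) :=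
    (hφ.conjugatesGenerators.mul_zpow fun _ => n).commute_conj ((commute_of_of h_adj).zpow_right _)
  have h_exp : exponent (a⁻¹ * φ (of Γ s ^ (δ : ℤ)) * a) v = 0 := by
    simp [hφ.conjugatesGenerators.exponent_map_of, exponent_of_of_ne h_adj.ne]
  have h_eq : halfspace v ε a = halfspace v ε (φ (of Γ s ^ (δ : ℤ)) * a) := by
    rw [halfspace_eq_iff, ← mul_assoc]
    exact mem_link_of_commute h_comm h_exp
  nth_rw 1 [h_eq]
  exact mul_left_mem_halfspace_mul_left

lemma disjoint_halfspace_of_not_adj (hφ : Normalized φ h) {v s : V} (h_ne : s ≠ v)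
    (h_adj : ¬ Γ.Adj s v) {δ ε : ℤˣ} {m n : ℤ}
    (h_one : 1 ∉ halfspace s δ (h s * of Γ s ^ m)) (h_one' : 1 ∉ halfspace v ε (h v * of Γ v ^ n)) :
    Disjoint (halfspace s δ (h s * of Γ s ^ m)) (halfspace v ε (h v * of Γ v ^ n)) := by
  have hs : s ∉ star Γ v := not_or.2 ⟨h_ne, fun hs => h_adj hs.symm⟩
  have hv : v ∉ star Γ s := not_or.2 ⟨h_ne.symm, h_adj⟩
  refine disjoint_halfspace h_adj ?_ ?_
  · rwa [mul_zpow_mem_halfspace_iff h_ne, mul_zpow_mem_halfspace_iff h_ne,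
      hφ.balanced.mem_halfspace_iff hs]
  · rwa [mul_zpow_mem_halfspace_iff h_ne.symm, mul_zpow_mem_halfspace_iff h_ne.symm,
      hφ.balanced.mem_halfspace_iff hv]

lemma mem_halfspace_iff_of_not_adj (hφ : Normalized φ h) {v s : V} (h_ne : s ≠ v)
    (h_adj : ¬ Γ.Adj s v) {δ : ℤˣ} {y : RAAG Γ} (hy : y ∈ halfspace s δ (h s)) (ε : ℤˣ) (n : ℤ) :
    y ∈ halfspace v ε (h v * of Γ v ^ n) ↔ ε * n < 0 := by
  rw [← hφ.one_mem_halfspace_iff]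
  refine mem_halfspace_iff_of_forall_imp (fun ε n hy' => ?_) ε n
  by_contra h_one
  rw [← mul_one (h s), ← zpow_zero (of Γ s)] at hy
  have h_one' : 1 ∉ halfspace s δ (h s * of Γ s ^ (0 : ℤ)) :=
    (hφ.one_mem_halfspace_iff s δ 0).not.2 (by simp)
  exact Set.disjoint_left.1 (hφ.disjoint_halfspace_of_not_adj h_ne h_adj h_one' h_one) hy hy'

/-- Ping-pong: writing `x = of Γ s ^ δ * y` with `y` shorter, membership of `φ x` in the halfspaces
of `s` and of its neighbours reduces to `y`, and for the other vertices it is decided by `φ x`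
lying in the halfspace of `s` at `h s`. -/
lemma mem_halfspace_zpow_iff (hφ : Normalized φ h) (x : RAAG Γ) (v : V) (ε : ℤˣ) (n : ℤ) :
    x ∈ halfspace v ε (of Γ v ^ n) ↔ φ x ∈ halfspace v ε (h v * of Γ v ^ n) := by
  have h_id := normalized_id Γ
  induction hk : length x using Nat.strong_induction_on generalizing x v ε n with
  | _ k ih =>
    by_cases hx : x = 1
    · have h_one := h_id.one_mem_halfspace_iff v ε n
      rw [one_mul] at h_one
      rw [hx, map_one, hφ.one_mem_halfspace_iff, h_one]
    obtain ⟨s, δ, h_lt⟩ := exists_length_inv_mul_lt hx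
    have h_first := mem_halfspace_of_length_inv_mul_lt h_lt
    obtain ⟨y, rfl⟩ : ∃ y, x = of Γ s ^ (δ : ℤ) * y := ⟨_, (mul_inv_cancel_left _ _).symm⟩
    rw [inv_mul_cancel_left, hk] at h_lt
    have ih_y (v : V) (ε : ℤˣ) (n : ℤ) :
        y ∈ halfspace v ε (of Γ v ^ n) ↔ φ y ∈ halfspace v ε (h v * of Γ v ^ n) :=
      ih _ h_lt y v ε n rfl
    have h_self (ε : ℤˣ) (n : ℤ) : of Γ s ^ (δ : ℤ) * y ∈ halfspace s ε (of Γ s ^ n) ↔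
        φ (of Γ s ^ (δ : ℤ) * y) ∈ halfspace s ε (h s * of Γ s ^ n) := by
      rw [map_mul, hφ.map_mul_mem_halfspace_self_iff, ← ih_y]
      simpa using h_id.map_mul_mem_halfspace_self_iff s δ ε n y
    obtain rfl | h_ne := eq_or_ne s v
    · exact h_self ε n
    by_cases h_adj : Γ.Adj s v
    · rw [map_mul, hφ.map_mul_mem_halfspace_iff_of_adj h_adj.symm, ← ih_y]
      simpa using h_id.map_mul_mem_halfspace_iff_of_adj h_adj.symm δ ε n y
    · have h_map : φ (of Γ s ^ (δ : ℤ) * y) ∈ halfspace s δ (h s) := by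
        simpa using (h_self δ 0).1 (by simpa using h_first)
      rw [hφ.mem_halfspace_iff_of_not_adj h_ne h_adj h_map]
      simpa using h_id.mem_halfspace_iff_of_not_adj h_ne h_adj h_first ε n

lemma map_of_eq_of_surjective (hφ : Normalized φ h) (h_surj : Function.Surjective φ) (s : V) :
    φ (of Γ s) = of Γ s := by
  obtain ⟨x, hx⟩ := h_surj (of Γ s)
  have hx_ne : x ≠ 1 := by
    rintro rfl
    simpa using congrFun (congrArg exponent hx) s
  obtain ⟨t, δ, h_lt⟩ := exists_length_inv_mul_lt hx_ne
  have h_mem : of Γ s ∈ halfspace t δ (h t) := by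
    have h_first := mem_halfspace_of_length_inv_mul_lt h_lt
    simpa [hx] using (hφ.mem_halfspace_zpow_iff x t δ 0).1 (by simpa using h_first)
  have h_one : 1 ∉ halfspace t δ (h t) := by
    simpa using (hφ.one_mem_halfspace_iff t δ 0).not
  obtain ⟨rfl, -, h_link⟩ := eq_and_mem_link_of_enters (δ := 1) h_one (by simpa using h_mem)
  have h_comm : Commute (of Γ s) (h s) := commute_of_mem_link (by simpa using h_link)
  rw [hφ.conjugatesGenerators, ← h_comm.eq, mul_inv_cancel_right]

end Normalized

lemma ConjugatesGenerators.exists_eq_conj [Finite V] (hΓ : ∀ u, connectedOutsideStar Γ u)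
    {φ : MulAut (RAAG Γ)} {h : V → RAAG Γ} (hφ : ConjugatesGenerators φ.toMonoidHom h) :
    ∃ g, MulAut.conj g = φ := by
  obtain ⟨q, h', hφ', hh'⟩ := hφ.exists_balanced hΓ
  obtain ⟨h'', hφ''⟩ := hh'.exists_normalized hφ'
  have h_id : (MulAut.conj q * φ).toMonoidHom = MonoidHom.id (RAAG Γ) :=
    hom_ext (hφ''.map_of_eq_of_surjective (MulAut.conj q * φ).surjective)
  have h_one : MulAut.conj q * φ = 1 := MulEquiv.toMonoidHom_injective h_id
  exact ⟨q⁻¹, by rw [map_inv, inv_eq_of_mul_eq_one_right h_one]⟩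

/-! ### Transvections and partial conjugations -/

section FiniteOut

variable {G : Type*} [Group G]

lemma exists_pow_eq_conj [Finite (Out G)] (φ : MulAut G) :
    ∃ n : ℕ, n ≠ 0 ∧ ∃ g, MulAut.conj g = φ ^ n :=
  ⟨Nat.card (Out G), Nat.card_pos.ne', (QuotientGroup.eq_one_iff _).1
    (pow_card_eq_one' (x := (QuotientGroup.mk φ : Out G)))⟩

lemma exists_eq_conj_of_map_add [Finite (Out G)] {f : ℤ → G →* G} (h_zero : f 0 = MonoidHom.id G)
    (h_add : ∀ k l, f (k + l) = (f k).comp (f l)) :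
    ∃ n : ℤ, n ≠ 0 ∧ ∃ g, ∀ x, f n x = g * x * g⁻¹ := by
  let φ : MulAut G := MonoidHom.toMulEquiv (f 1) (f (-1))
    (by rw [← h_add, neg_add_cancel, h_zero]) (by rw [← h_add, add_neg_cancel, h_zero])
  have h_pow (n : ℕ) (x : G) : (φ ^ n) x = f n x := by
    induction n with
    | zero => simp [h_zero]
    | succ n ih => rw [pow_succ', MulAut.mul_apply, ih, Nat.cast_succ, add_comm, h_add]; rfl
  obtain ⟨n, hn, g, hg⟩ := exists_pow_eq_conj φ
  exact ⟨n, Nat.cast_ne_zero.2 hn, g, fun x => by rw [← h_pow, ← hg, MulAut.conj_apply]⟩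

end FiniteOut

section Transvection

variable {u v : V}

open Classical in
/-- The transvection `u ↦ u * v ^ k`, which fixes the other generators. -/
noncomputable def transvection (h_sub : Γ.neighborSet u ⊆ star Γ v) (k : ℤ) : RAAG Γ →* RAAG Γ :=
  lift (fun s => if s = u then of Γ u * of Γ v ^ k else of Γ s) <| by
    have h_comm {t : V} (ht : Γ.Adj u t) : Commute (of Γ u * of Γ v ^ k) (of Γ t) :=
      (commute_of_of ht).mul_left ((commute_of_of_mem_star (h_sub ht)).zpow_left k)
    intro s t h_adj
    split_ifs with hs ht ht
    · exact Commute.refl _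
    · exact h_comm (hs ▸ h_adj)
    · exact (h_comm (ht ▸ h_adj.symm)).symm
    · exact commute_of_of h_adj

variable (h_sub : Γ.neighborSet u ⊆ star Γ v) (k : ℤ)

lemma transvection_of_self : transvection h_sub k (of Γ u) = of Γ u * of Γ v ^ k := by
  simp [transvection]

lemma transvection_of_of_ne {s : V} (hs : s ≠ u) : transvection h_sub k (of Γ s) = of Γ s := by
  simp [transvection, hs]

lemma transvection_zero : transvection h_sub 0 = MonoidHom.id (RAAG Γ) := by
  refine hom_ext fun s => ?_
  obtain rfl | hs := eq_or_ne s u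
  · simp [transvection_of_self]
  · simp [transvection_of_of_ne h_sub 0 hs]

lemma transvection_add (h_ne : u ≠ v) (l : ℤ) :
    transvection h_sub (k + l) = (transvection h_sub k).comp (transvection h_sub l) := by
  refine hom_ext fun s => ?_
  obtain rfl | hs := eq_or_ne s u
  · simp [transvection_of_self, transvection_of_of_ne h_sub k h_ne.symm, zpow_add, mul_assoc]
  · simp [transvection_of_of_ne h_sub _ hs]

end Transvection

lemma eq_of_neighborSet_subset_star_of_finite_out [Finite (Out (RAAG Γ))] {u v : V}
    (h_sub : Γ.neighborSet u ⊆ star Γ v) : u = v := by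
  by_contra h_ne
  obtain ⟨n, hn, g, hg⟩ := exists_eq_conj_of_map_add (transvection_zero h_sub)
    fun k l => transvection_add h_sub k h_ne l
  have h_exp := congrFun (congrArg exponent (hg (of Γ u))) v
  simp [transvection_of_self, hn] at h_exp

section PartialConjugation

variable {u : V} {C : Set V}

open Classical in
/-- The partial conjugation by `u ^ k` of the generators in `C`, which fixes the other generators;
it respects the relations when the vertices outside `C` that are adjacent to `C` all lie in the star
of `u`. -/
noncomputable def partialConj (hC : ∀ s ∈ C, ∀ t ∉ C, Γ.Adj s t → t ∈ star Γ u) (k : ℤ) :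
    RAAG Γ →* RAAG Γ :=
  lift (fun s => if s ∈ C then of Γ u ^ k * of Γ s * (of Γ u ^ k)⁻¹ else of Γ s) <| by
    have h_comm {s t : V} (hs : s ∈ C) (ht : t ∉ C) (h_adj : Γ.Adj s t) :
        Commute (of Γ u ^ k * of Γ s * (of Γ u ^ k)⁻¹) (of Γ t) := by
      have hu : Commute (of Γ u ^ k) (of Γ t) :=
        (commute_of_of_mem_star (hC s hs t ht h_adj)).zpow_left k
      exact (hu.mul_left (commute_of_of h_adj)).mul_left hu.inv_left
    intro s t h_adj
    split_ifs with hs ht ht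
    · exact (commute_of_of h_adj).conj _
    · exact h_comm hs ht h_adj
    · exact (h_comm ht hs h_adj.symm).symm
    · exact commute_of_of h_adj

variable (hC : ∀ s ∈ C, ∀ t ∉ C, Γ.Adj s t → t ∈ star Γ u) (k : ℤ)

lemma partialConj_of_mem {s : V} (hs : s ∈ C) :
    partialConj hC k (of Γ s) = of Γ u ^ k * of Γ s * (of Γ u ^ k)⁻¹ := by
  simp [partialConj, hs]

lemma partialConj_of_notMem {s : V} (hs : s ∉ C) : partialConj hC k (of Γ s) = of Γ s := by
  simp [partialConj, hs]

lemma partialConj_zero : partialConj hC 0 = MonoidHom.id (RAAG Γ) := by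
  refine hom_ext fun s => ?_
  by_cases hs : s ∈ C
  · simp [partialConj_of_mem hC 0 hs]
  · simp [partialConj_of_notMem hC 0 hs]

lemma partialConj_add (hu : u ∉ C) (l : ℤ) :
    partialConj hC (k + l) = (partialConj hC k).comp (partialConj hC l) := by
  refine hom_ext fun s => ?_
  by_cases hs : s ∈ C
  · simp only [MonoidHom.comp_apply, partialConj_of_mem hC _ hs, map_mul, map_inv, map_zpow,
      partialConj_of_notMem hC k hu]
    group
  · simp [partialConj_of_notMem hC _ hs]

end PartialConjugation

/-- A conjugation acting as the `n`-th partial conjugation would be by an element `g` whose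
`u`-exponent is both `n`, as `of Γ u ^ (-n) * g` commutes with a vertex of `C` outside the star of
`u`, and `0`, as `g` commutes with such a vertex outside `C`. -/
lemma mem_of_mem_of_finite_out [Finite (Out (RAAG Γ))] {u : V} {C : Set V} (hu : u ∉ C)
    (hC : ∀ s ∈ C, ∀ t ∉ C, Γ.Adj s t → t ∈ star Γ u) {x y : V}
    (hx : x ∉ star Γ u) (hy : y ∉ star Γ u) (hxC : x ∈ C) : y ∈ C := by
  by_contra hyC
  obtain ⟨n, hn, g, hg⟩ := exists_eq_conj_of_map_add (partialConj_zero hC)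
    fun k l => partialConj_add hC k hu l
  have hgx : Commute (of Γ x) ((of Γ u ^ n)⁻¹ * g) := by
    have h_eq := hg (of Γ x)
    rw [partialConj_of_mem hC n hxC] at h_eq
    calc of Γ x * ((of Γ u ^ n)⁻¹ * g)
      _ = (of Γ u ^ n)⁻¹ * (of Γ u ^ n * of Γ x * (of Γ u ^ n)⁻¹) * g := by group
      _ = (of Γ u ^ n)⁻¹ * g * of Γ x := by rw [h_eq]; group
  have hgy : Commute (of Γ y) g := by
    have h_eq := hg (of Γ y)
    rw [partialConj_of_notMem hC n hyC, eq_mul_inv_iff_mul_eq] at h_eq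
    exact h_eq
  have h_exp := exponent_eq_zero_of_mem_parabolic (mem_parabolic_star_of_commute hgx)
    (mem_star_comm.not.1 hx)
  have h_exp' := exponent_eq_zero_of_mem_parabolic (mem_parabolic_star_of_commute hgy)
    (mem_star_comm.not.1 hy)
  simp [h_exp', hn] at h_exp

lemma connectedOutsideStar_of_finite_out [Finite (Out (RAAG Γ))] (u : V) :
    connectedOutsideStar Γ u := by
  intro x y
  let C : Set V :=
    {z | ∃ hz : z ∉ star Γ u, (Γ.induce {v | v ∉ star Γ u}).Reachable x ⟨z, hz⟩}
  have hC : ∀ s ∈ C, ∀ t ∉ C, Γ.Adj s t → t ∈ star Γ u := by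
    rintro s ⟨hs, h_reach⟩ t ht h_adj
    by_contra htu
    have h_adj' : (Γ.induce {v | v ∉ star Γ u}).Adj ⟨s, hs⟩ ⟨t, htu⟩ := h_adj
    exact ht ⟨htu, h_reach.trans h_adj'.reachable⟩
  have hu : u ∉ C := fun hu => hu.1 (Or.inl rfl)
  exact (mem_of_mem_of_finite_out hu hC x.2 y.2 ⟨x.2, .refl _⟩).2

/-! ### Finiteness -/

lemma finite_out_of_connectedOutsideStar [Finite V] (h_conn : ∀ u, connectedOutsideStar Γ u)
    (h_sub : ∀ u v, Γ.neighborSet u ⊆ star Γ v → u = v) : Finite (Out (RAAG Γ)) := by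
  choose w ε x hx using exists_map_of_eq_conj h_sub
  refine Finite.of_injective (fun c : Out (RAAG Γ) => (w (Quotient.out c), ε (Quotient.out c)))
    fun c d hcd => ?_
  rw [← Quotient.out_eq c, ← Quotient.out_eq d]
  obtain ⟨hw, hε⟩ := Prod.mk.inj hcd
  generalize Quotient.out c = φ, Quotient.out d = ψ at hw hε
  have h_conj : ConjugatesGenerators (φ⁻¹ * ψ).toMonoidHom
      fun v => φ⁻¹ (x ψ v * (x φ v)⁻¹) := fun v => by
    have h_eq : ψ (of Γ v) = x ψ v * (x φ v)⁻¹ * φ (of Γ v) * (x ψ v * (x φ v)⁻¹)⁻¹ := by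
      rw [hx φ, hx ψ, hw, hε]
      group
    change φ⁻¹ (ψ (of Γ v)) = _
    rw [h_eq, map_mul, map_mul, map_inv, MulAut.inv_apply_self]
  exact QuotientGroup.eq.2 (h_conj.exists_eq_conj h_conn)

end RAAG

theorem out_raag_finite_iff {V : Type} [Fintype V] (Γ : SimpleGraph V) :
    Finite (Out (RAAG Γ)) ↔
      ∀ u : V, connectedOutsideStar Γ u ∧
        ∀ v : V, Γ.neighborSet u ⊆ star Γ v → u = v := by
  constructor
  · intro h_fin u
    exact ⟨RAAG.connectedOutsideStar_of_finite_out u, fun _ =>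
      RAAG.eq_of_neighborSet_subset_star_of_finite_out⟩
  · intro h
    exact RAAG.finite_out_of_connectedOutsideStar (fun u => (h u).1) fun u => (h u).2
end

section
/- Let Γ be a nonempty finite simple graph such that for every vertex u: (i) any two vertices of Γ lying outside st(u) are connected by a path all of whose vertices lie outside st(u); and (ii) for every vertex v, if lk(u) ⊆ st(v) then u = v. Then Γ is connected. -/
/-!
If `y` is not reachable from `u`, then `y` lies outside the star of `u`, and any vertex of the
component of `u` outside that star would be joined to `y` by condition (i). So in a disconnected
graph every component is the star of each of its vertices. For adjacent `x` and `w` this puts the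
link of `x` inside the star of `w`, against condition (ii). Hence the link of `x` is empty, and (ii)
makes `x` equal to every vertex.
-/

section

variable {V : Type*} {Γ : SimpleGraph V} {u v x y : V}

theorem reachable_of_mem_star (hv : v ∈ star Γ u) : Γ.Reachable u v := by
  obtain rfl | huv := Set.mem_insert_iff.mp hv
  · exact .rfl
  · exact SimpleGraph.Adj.reachable huv

theorem connectedOutsideStar.reachable (hu : connectedOutsideStar Γ u)
    (hx : x ∉ star Γ u) (hy : y ∉ star Γ u) : Γ.Reachable x y :=
  (hu ⟨x, hx⟩ ⟨y, hy⟩).map (SimpleGraph.Embedding.induce _).toHom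

theorem connectedOutsideStar.mem_star_of_reachable (hu : connectedOutsideStar Γ u)
    (hy : ¬Γ.Reachable u y) (hx : Γ.Reachable u x) : x ∈ star Γ u := by
  by_contra hx_star
  have hy_star : y ∉ star Γ u := fun h ↦ hy (reachable_of_mem_star h)
  exact hy (hx.trans (hu.reachable hx_star hy_star))

theorem neighborSet_subset_star_of_not_reachable (hv : connectedOutsideStar Γ v)
    (huv : Γ.Adj u v) (hy : ¬Γ.Reachable u y) : Γ.neighborSet u ⊆ star Γ v := by
  intro w (huw : Γ.Adj u w)
  have hvy : ¬Γ.Reachable v y := fun h ↦ hy (huv.reachable.trans h)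
  exact hv.mem_star_of_reachable hvy (huv.symm.reachable.trans huw.reachable)

end

theorem connected_of_star_conditions_general {V : Type*} [Nonempty V] (Γ : SimpleGraph V)
    (h1 : ∀ u : V, connectedOutsideStar Γ u)
    (h2 : ∀ u v : V, Γ.neighborSet u ⊆ star Γ v → u = v) :
    Γ.Connected := by
  refine ⟨fun x y ↦ ?_⟩
  by_contra hxy
  have link_empty : Γ.neighborSet x = ∅ := by
    refine Set.eq_empty_of_forall_notMem fun w (hxw : Γ.Adj x w) ↦ hxw.ne ?_
    exact h2 x w (neighborSet_subset_star_of_not_reachable (h1 w) hxw hxy)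
  have x_eq_y : x = y := h2 x y (link_empty ▸ Set.empty_subset _)
  exact hxy (x_eq_y ▸ .rfl)

theorem connected_of_star_conditions {V : Type} [Fintype V] [Nonempty V]
    (Γ : SimpleGraph V)
    (h1 : ∀ u : V, connectedOutsideStar Γ u)
    (h2 : ∀ u v : V, Γ.neighborSet u ⊆ star Γ v → u = v) :
    Γ.Connected :=
  connected_of_star_conditions_general Γ h1 h2
end
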